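/- arXiv:2209.13784 — 4 statements merged into one kernel-verified Lean document; each statement's English description precedes it below -/
import Mathlib

section
/- For every nonnegative integer n: if n is even then cp^o_{1,1,2}(n) ≤ cp^e_{1,1,2}(n), and if n is odd then cp^o_{1,1,2}(n) = cp^e_{1,1,2}(n). -/
/-- `(γ, ρ, σ)` is an `(a,b,m)`-copartition: every part of `γ` is `≥ a` and `≡ a (mod m)`,
every part of `σ` is `≥ b` and `≡ b (mod m)`, and `ρ` consists of exactly `ν(σ)` parts,
each of size `m · ν(γ)`. -/
def IsCopartition (a b m : ℕ) (γ ρ σ : Multiset ℕ) : Prop :=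
  (∀ x ∈ γ, a ≤ x ∧ x % m = a % m) ∧
  (∀ x ∈ σ, b ≤ x ∧ x % m = b % m) ∧
  ρ = Multiset.replicate (Multiset.card σ) (m * Multiset.card γ)

/-- The set of `(a,b,m)`-copartitions of size `n`. -/
def cpSet (a b m n : ℕ) : Set (Multiset ℕ × Multiset ℕ × Multiset ℕ) :=
  {t | IsCopartition a b m t.1 t.2.1 t.2.2 ∧ t.1.sum + t.2.1.sum + t.2.2.sum = n}

/-- `cp^o_{a,b,m}(n)`: the number of `(a,b,m)`-copartitions of size `n`
with an odd number of ground parts. -/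
noncomputable def cpOdd (a b m n : ℕ) : ℕ :=
  {t ∈ cpSet a b m n | Odd (Multiset.card t.1)}.ncard

/-- `cp^e_{a,b,m}(n)`: the number of `(a,b,m)`-copartitions of size `n`
with an even number of ground parts. -/
noncomputable def cpEven (a b m n : ℕ) : ℕ :=
  {t ∈ cpSet a b m n | Even (Multiset.card t.1)}.ncard

/-!
Let `G a b` be the generating function of `(a,b,m)`-copartitions in which ground parts are weighted
by `x` and sky parts by `y`. Deleting a ground part `a`, or a sky part `b`, if there is one gives
`G a b = G (a + m) b + x X ^ a G a (b + m) = G a (b + m) + y X ^ b G (a + m) b`,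
and eliminating `G a (b + m)`, resp. `G (a + m) b`, yields
`(1 - x X ^ a) G a b = (1 - x y X ^ (a + b)) G (a + m) b` and its mirror image. For `x = -1`,
`y = 1` and `a = b` the two combine to
`(1 - X ^ (2a)) G a a = (1 + X ^ (2a)) (1 + X ^ (2a + m)) G (a + m) (a + m)`,
where `G a a ≡ 1` modulo `X ^ a`. Hence `G a a`, whose coefficients are the differences between the
even and the odd counts, has nonnegative coefficients and involves only powers of
`X ^ gcd (2a, m)`.
-/

open PowerSeries

section Indices

/-- The copartition whose ground parts are `a + m * i` for `i ∈ p.1` and whose sky parts are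
`b + m * j` for `j ∈ p.2`. In these coordinates raising `a` to `a + m` is the shift
`i ↦ i + 1`, and the smallest admissible part has index `0`. -/
def copartitionOfIndices (a b m : ℕ) (p : Multiset ℕ × Multiset ℕ) :
    Multiset ℕ × Multiset ℕ × Multiset ℕ :=
  (p.1.map (a + m * ·), Multiset.replicate p.2.card (m * p.1.card), p.2.map (b + m * ·))

/-- The size of `copartitionOfIndices a b m p`. -/
def sizeOfIndices (a b m : ℕ) (p : Multiset ℕ × Multiset ℕ) : ℕ :=
  a * p.1.card + b * p.2.card + m * (p.1.sum + p.2.sum + p.1.card * p.2.card)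

variable {a b m n : ℕ}

lemma copartitionOfIndices_injective (hm : 0 < m) :
    Function.Injective (copartitionOfIndices a b m) := by
  have affine_injective (c : ℕ) : Function.Injective (c + m * ·) :=
    (add_right_injective c).comp (mul_right_injective₀ hm.ne')
  rintro ⟨g, s⟩ ⟨g', s'⟩ h
  simp only [copartitionOfIndices, Prod.mk.injEq] at h
  exact Prod.ext (Multiset.map_injective (affine_injective a) h.1)
    (Multiset.map_injective (affine_injective b) h.2.2)

lemma copartitionOfIndices_mem_cpSet (p : Multiset ℕ × Multiset ℕ) :
    copartitionOfIndices a b m p ∈ cpSet a b m (sizeOfIndices a b m p) := by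
  refine ⟨⟨?_, ?_, ?_⟩, ?_⟩
  · simp [copartitionOfIndices]
  · simp [copartitionOfIndices]
  · simp [copartitionOfIndices]
  · have sum_map_affine (c : ℕ) (s : Multiset ℕ) :
        (s.map (c + m * ·)).sum = c * s.card + m * s.sum := by
      rw [Multiset.sum_map_add, Multiset.map_const', Multiset.sum_replicate,
        Multiset.sum_map_mul_left (f := fun i ↦ i), Multiset.map_id', smul_eq_mul, mul_comm]
    simp only [copartitionOfIndices, sizeOfIndices, sum_map_affine, Multiset.sum_replicate,
      smul_eq_mul]
    ring

lemma exists_map_add_mul_eq {s : Multiset ℕ} (hs : ∀ x ∈ s, a ≤ x ∧ x % m = a % m) :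
    ∃ t : Multiset ℕ, t.map (a + m * ·) = s := by
  refine ⟨s.map fun x ↦ (x - a) / m, ?_⟩
  rw [Multiset.map_map]
  refine (Multiset.map_congr rfl fun x hx ↦ ?_).trans s.map_id
  obtain ⟨hax, hmod⟩ := hs x hx
  have hdvd : m ∣ x - a := (Nat.modEq_iff_dvd' hax).1 hmod.symm
  simp [Nat.mul_div_cancel' hdvd, hax]

lemma cpSet_eq_image (a b m n : ℕ) :
    cpSet a b m n = copartitionOfIndices a b m '' {p | sizeOfIndices a b m p = n} := by
  ext t
  constructor
  · obtain ⟨γ, ρ, σ⟩ := t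
    intro ht
    have ⟨⟨hγ, hσ, hρ⟩, hn⟩ := ht
    obtain ⟨g, rfl⟩ := exists_map_add_mul_eq hγ
    obtain ⟨s, rfl⟩ := exists_map_add_mul_eq hσ
    have heq : copartitionOfIndices a b m (g, s) =
        (g.map (a + m * ·), ρ, s.map (b + m * ·)) := by
      simpa [copartitionOfIndices] using hρ.symm
    refine ⟨(g, s), ?_, heq⟩
    rw [← heq] at hn
    exact (copartitionOfIndices_mem_cpSet (g, s)).2.symm.trans hn
  · rintro ⟨p, rfl, rfl⟩
    exact copartitionOfIndices_mem_cpSet p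

lemma finite_setOf_card_le_sum_le (k n : ℕ) :
    {s : Multiset ℕ | s.card ≤ k ∧ s.sum ≤ n}.Finite := by
  refine (Set.finite_Iic (k • Multiset.range (n + 1))).subset fun s ⟨hcard, hsum⟩ ↦ ?_
  refine Multiset.le_iff_count.2 fun x ↦ ?_
  by_cases hx : x ∈ s
  · have hxn : x ≤ n := (Multiset.single_le_sum (fun _ _ ↦ Nat.zero_le _) x hx).trans hsum
    have hone : (Multiset.range (n + 1)).count x = 1 :=
      Multiset.count_eq_one_of_mem (Multiset.nodup_range _)
        (Multiset.mem_range.2 (Nat.lt_succ_of_le hxn))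
    rw [Multiset.count_nsmul, hone, mul_one]
    exact (Multiset.count_le_card x s).trans hcard
  · simp [Multiset.count_eq_zero_of_notMem hx]

lemma card_le_sizeOfIndices (a b m : ℕ) (p : Multiset ℕ × Multiset ℕ) :
    a * p.1.card + b * p.2.card ≤ sizeOfIndices a b m p :=
  Nat.le_add_right _ _

lemma sum_le_sizeOfIndices (a b : ℕ) (hm : 0 < m) (p : Multiset ℕ × Multiset ℕ) :
    p.1.sum + p.2.sum ≤ sizeOfIndices a b m p :=
  calc p.1.sum + p.2.sum ≤ p.1.sum + p.2.sum + p.1.card * p.2.card := Nat.le_add_right _ _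
    _ ≤ m * (p.1.sum + p.2.sum + p.1.card * p.2.card) := Nat.le_mul_of_pos_left _ hm
    _ ≤ sizeOfIndices a b m p := Nat.le_add_left _ _

lemma finite_setOf_sizeOfIndices_eq (ha : 0 < a) (hb : 0 < b) (hm : 0 < m) (n : ℕ) :
    {p | sizeOfIndices a b m p = n}.Finite := by
  refine ((finite_setOf_card_le_sum_le n n).prod (finite_setOf_card_le_sum_le n n)).subset ?_
  rintro p rfl
  have hcard := card_le_sizeOfIndices a b m p
  have hsum := sum_le_sizeOfIndices a b hm p
  have hγ : p.1.card ≤ a * p.1.card := Nat.le_mul_of_pos_left _ ha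
  have hσ : p.2.card ≤ b * p.2.card := Nat.le_mul_of_pos_left _ hb
  exact ⟨⟨by lia, by lia⟩, by lia, by lia⟩

lemma finite_cpSet (ha : 0 < a) (hb : 0 < b) (hm : 0 < m) (n : ℕ) : (cpSet a b m n).Finite := by
  rw [cpSet_eq_image]
  exact (finite_setOf_sizeOfIndices_eq ha hb hm n).image _

lemma sizeOfIndices_swap (a b m : ℕ) (p : Multiset ℕ × Multiset ℕ) :
    sizeOfIndices b a m p.swap = sizeOfIndices a b m p := by
  simp only [sizeOfIndices, Prod.fst_swap, Prod.snd_swap]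
  ring

lemma sizeOfIndices_map_succ (a b m : ℕ) (p : Multiset ℕ × Multiset ℕ) :
    sizeOfIndices a b m (p.map (Multiset.map Nat.succ) id) = sizeOfIndices (a + m) b m p := by
  simp only [sizeOfIndices, Prod.map_fst, Prod.map_snd, Multiset.card_map, id, Nat.succ_eq_add_one,
    Multiset.sum_map_add, Multiset.map_id', Multiset.map_const', Multiset.sum_replicate,
    smul_eq_mul]
  ring

lemma sizeOfIndices_cons_zero (a b m : ℕ) (p : Multiset ℕ × Multiset ℕ) :
    sizeOfIndices a b m (p.map (0 ::ₘ ·) id) = a + sizeOfIndices a (b + m) m p := by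
  simp only [sizeOfIndices, Prod.map_fst, Prod.map_snd, Multiset.card_cons, Multiset.sum_cons, id]
  ring

lemma exists_map_succ_eq {s : Multiset ℕ} (hs : 0 ∉ s) : ∃ t : Multiset ℕ, t.map Nat.succ = s := by
  refine ⟨s.map Nat.pred, ?_⟩
  rw [Multiset.map_map]
  refine (Multiset.map_congr rfl fun x hx ↦ ?_).trans s.map_id
  exact Nat.succ_pred (ne_of_mem_of_not_mem hx hs)

lemma setOf_sizeOfIndices_eq_union (a b m n : ℕ) :
    {p | sizeOfIndices a b m p = n} =
      Prod.map (Multiset.map Nat.succ) id '' {p | sizeOfIndices (a + m) b m p = n} ∪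
        Prod.map (0 ::ₘ ·) id '' {p | a + sizeOfIndices a (b + m) m p = n} := by
  ext p
  constructor
  · obtain ⟨g, s⟩ := p
    intro hp
    by_cases h0 : 0 ∈ g
    · obtain ⟨g, rfl⟩ := Multiset.exists_cons_of_mem h0
      exact .inr ⟨(g, s), (sizeOfIndices_cons_zero a b m (g, s)).symm.trans hp, rfl⟩
    · obtain ⟨g, rfl⟩ := exists_map_succ_eq h0
      exact .inl ⟨(g, s), (sizeOfIndices_map_succ a b m (g, s)).symm.trans hp, rfl⟩
  · rintro (⟨p, rfl, rfl⟩ | ⟨p, rfl, rfl⟩)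
    · exact sizeOfIndices_map_succ a b m p
    · exact sizeOfIndices_cons_zero a b m p

lemma disjoint_image_map_succ_image_cons_zero (S T : Set (Multiset ℕ × Multiset ℕ)) :
    Disjoint (Prod.map (Multiset.map Nat.succ) id '' S) (Prod.map (0 ::ₘ ·) id '' T) := by
  rw [Set.disjoint_left]
  rintro _ ⟨p, -, rfl⟩ ⟨q, -, hqp⟩
  have h0 : 0 ∈ p.1.map Nat.succ := by
    rw [← Prod.map_fst (Multiset.map Nat.succ) id p, ← hqp]
    exact Multiset.mem_cons_self _ _
  simp at h0

end Indices

section GeneratingFunction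

variable {R : Type*}

/-- The generating function `∑ x ^ ν(γ) * y ^ ν(σ) * X ^ (|γ| + |ρ| + |σ|)` over all
`(a,b,m)`-copartitions. Coefficients may be junk values if `a = 0` or `b = 0`: parts equal to `0`
are then allowed, and infinitely many copartitions can have the same size. -/
noncomputable def copartitionGF [CommSemiring R] (x y : R) (a b m : ℕ) : R⟦X⟧ :=
  mk fun n ↦ ∑ᶠ t ∈ cpSet a b m n, x ^ t.1.card * y ^ t.2.2.card

section CommSemiring

variable [CommSemiring R] (x y : R) {a b m n : ℕ}

lemma coeff_copartitionGF (hm : 0 < m) :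
    coeff n (copartitionGF x y a b m) =
      ∑ᶠ p ∈ {p | sizeOfIndices a b m p = n}, x ^ p.1.card * y ^ p.2.card := by
  rw [copartitionGF, coeff_mk, cpSet_eq_image,
    finsum_mem_image (copartitionOfIndices_injective hm).injOn]
  simp only [copartitionOfIndices, Multiset.card_map]

lemma coeff_X_pow_mul_copartitionGF (k : ℕ) (hm : 0 < m) :
    coeff n (X ^ k * copartitionGF x y a b m) =
      ∑ᶠ p ∈ {p | k + sizeOfIndices a b m p = n}, x ^ p.1.card * y ^ p.2.card := by
  rw [coeff_X_pow_mul']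
  split_ifs with hkn
  · rw [coeff_copartitionGF x y hm]
    have hset : {p | sizeOfIndices a b m p = n - k} = {p | k + sizeOfIndices a b m p = n} :=
      Set.ext fun p ↦ show _ = n - k ↔ k + _ = n by lia
    rw [hset]
  · have hset : {p | k + sizeOfIndices a b m p = n} = ∅ :=
      Set.eq_empty_of_forall_notMem fun p (hp : k + _ = n) ↦ by lia
    rw [hset, finsum_mem_empty]

lemma copartitionGF_swap (hm : 0 < m) : copartitionGF y x b a m = copartitionGF x y a b m := by
  ext n
  rw [coeff_copartitionGF y x hm, coeff_copartitionGF x y hm]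
  refine (finsum_mem_eq_of_bijOn Prod.swap ⟨fun p hp ↦ ?_, Prod.swap_injective.injOn,
    fun p hp ↦ ⟨p.swap, ?_, p.swap_swap⟩⟩ fun p _ ↦ ?_).symm
  · exact (sizeOfIndices_swap a b m p).trans hp
  · exact (sizeOfIndices_swap b a m p).trans hp
  · exact mul_comm _ _

lemma coeff_copartitionGF_eq_coeff_one (hm : 0 < m) (hna : n < a) (hnb : n < b) :
    coeff n (copartitionGF x y a b m) = coeff n 1 := by
  have eq_zero_of_size {p} (hp : sizeOfIndices a b m p = n) : p = 0 := by
    have hcard := card_le_sizeOfIndices a b m p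
    have hγ : p.1.card = 0 := by by_contra h; nlinarith [Nat.pos_of_ne_zero h]
    have hσ : p.2.card = 0 := by by_contra h; nlinarith [Nat.pos_of_ne_zero h]
    exact Prod.ext (Multiset.card_eq_zero.1 hγ) (Multiset.card_eq_zero.1 hσ)
  have size_zero : sizeOfIndices a b m 0 = 0 := by simp [sizeOfIndices]
  rw [coeff_copartitionGF x y hm, coeff_one]
  split_ifs with hn
  · have hset : {p | sizeOfIndices a b m p = n} = {0} :=
      Set.Subset.antisymm (fun p hp ↦ eq_zero_of_size hp) (by simp [size_zero, hn])
    simp [hset]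
  · have hset : {p | sizeOfIndices a b m p = n} = ∅ :=
      Set.eq_empty_of_forall_notMem fun p hp ↦
        hn (by rw [← hp, eq_zero_of_size hp, size_zero])
    simp [hset]

/-- Deleting a part `a` from `γ` shortens each part of `ρ` by `m`; this `m` is given to the
corresponding part of `σ`, which replaces `b` by `b + m`. -/
lemma copartitionGF_eq_add_left (ha : 0 < a) (hb : 0 < b) (hm : 0 < m) :
    copartitionGF x y a b m =
      copartitionGF x y (a + m) b m + C x * X ^ a * copartitionGF x y a (b + m) m := by
  ext n
  have hfin_succ := finite_setOf_sizeOfIndices_eq (a := a + m) (by lia) hb hm n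
  have hfin_cons : {p | a + sizeOfIndices a (b + m) m p = n}.Finite :=
    (finite_setOf_sizeOfIndices_eq ha (Nat.add_pos_left hb m) hm (n - a)).subset
      fun p (hp : _ = n) ↦ show _ = n - a by lia
  have inj_succ : Function.Injective (Prod.map (Multiset.map Nat.succ) (id (α := Multiset ℕ))) :=
    (Multiset.map_injective Nat.succ_injective).prodMap Function.injective_id
  have cons_injective : Function.Injective (fun g : Multiset ℕ ↦ 0 ::ₘ g) :=
    fun _ _ ↦ (Multiset.cons_inj_right 0).1
  have inj_cons : Function.Injective (Prod.map (0 ::ₘ ·) (id (α := Multiset ℕ))) :=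
    cons_injective.prodMap Function.injective_id
  rw [map_add, mul_assoc, coeff_C_mul, coeff_X_pow_mul_copartitionGF x y a hm,
    coeff_copartitionGF x y hm, coeff_copartitionGF x y hm, setOf_sizeOfIndices_eq_union,
    finsum_mem_union (disjoint_image_map_succ_image_cons_zero _ _) (hfin_succ.image _)
      (hfin_cons.image _),
    finsum_mem_image inj_succ.injOn, finsum_mem_image inj_cons.injOn, mul_finsum_mem' _ _ hfin_cons]
  simp only [Prod.map_fst, Prod.map_snd, Multiset.card_map, Multiset.card_cons, pow_succ', id,
    mul_assoc]

lemma copartitionGF_eq_add_right (ha : 0 < a) (hb : 0 < b) (hm : 0 < m) :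
    copartitionGF x y a b m =
      copartitionGF x y a (b + m) m + C y * X ^ b * copartitionGF x y (a + m) b m := by
  simpa only [copartitionGF_swap _ _ hm] using copartitionGF_eq_add_left y x hb ha hm

end CommSemiring

section CommRing

variable [CommRing R] (x y : R) {a b m : ℕ}

lemma copartitionGF_mul_one_sub_left (ha : 0 < a) (hb : 0 < b) (hm : 0 < m) :
    copartitionGF x y a b m * (1 - C x * X ^ a) =
      copartitionGF x y (a + m) b m * (1 - C (x * y) * X ^ (a + b)) := by
  rw [map_mul]
  linear_combination copartitionGF_eq_add_left x y ha hb hm -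
    C x * X ^ a * copartitionGF_eq_add_right x y ha hb hm

lemma copartitionGF_mul_one_sub_right (ha : 0 < a) (hb : 0 < b) (hm : 0 < m) :
    copartitionGF x y a b m * (1 - C y * X ^ b) =
      copartitionGF x y a (b + m) m * (1 - C (x * y) * X ^ (a + b)) := by
  simpa only [copartitionGF_swap _ _ hm, mul_comm y x, add_comm b a] using
    copartitionGF_mul_one_sub_left y x hb ha hm

end CommRing

lemma copartitionGF_neg_one_one_mul [CommRing R] {a m : ℕ} (ha : 0 < a) (hm : 0 < m) :
    copartitionGF (-1 : R) 1 a a m * (1 - X ^ (2 * a)) =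
      copartitionGF (-1) 1 (a + m) (a + m) m * ((1 + X ^ (2 * a)) * (1 + X ^ (2 * a + m))) := by
  have hleft := copartitionGF_mul_one_sub_left (-1 : R) 1 ha (Nat.add_pos_left ha m) hm
  have hright := copartitionGF_mul_one_sub_right (-1 : R) 1 ha ha hm
  simp only [map_neg, map_one, mul_one, one_mul, neg_mul, sub_neg_eq_add] at hleft hright
  linear_combination (1 + X ^ a) * hright + (1 + X ^ (2 * a)) * hleft

lemma finsum_mem_const {α : Type*} [Semiring R] {S : Set α} (hS : S.Finite) (c : R) :
    ∑ᶠ _t ∈ S, c = S.ncard * c := by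
  rw [finsum_mem_eq_finite_toFinset_sum _ hS, Finset.sum_const, nsmul_eq_mul,
    Set.ncard_eq_toFinset_card S hS]

lemma finsum_mem_neg_one_pow {α : Type*} [Ring R] {S : Set α} (hS : S.Finite) (f : α → ℕ) :
    ∑ᶠ t ∈ S, (-1 : R) ^ f t =
      ({t ∈ S | Even (f t)}.ncard : R) - ({t ∈ S | Odd (f t)}.ncard : R) := by
  have hinter : S ∩ {t | Even (f t)} = {t ∈ S | Even (f t)} := rfl
  have hsdiff : S \ {t | Even (f t)} = {t ∈ S | Odd (f t)} := by
    ext t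
    simp
  rw [← finsum_mem_inter_add_sdiff {t | Even (f t)} hS, hinter, hsdiff,
    finsum_mem_congr rfl fun t ht ↦ (ht.2 : Even (f t)).neg_one_pow,
    finsum_mem_congr rfl fun t ht ↦ (ht.2 : Odd (f t)).neg_one_pow,
    finsum_mem_const (hS.subset (Set.sep_subset _ _)),
    finsum_mem_const (hS.subset (Set.sep_subset _ _)), mul_one, mul_neg_one, sub_eq_add_neg]

lemma coeff_copartitionGF_neg_one_one [CommRing R] {a b m : ℕ} (ha : 0 < a) (hb : 0 < b)
    (hm : 0 < m) (n : ℕ) :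
    coeff n (copartitionGF (-1 : R) 1 a b m) = (cpEven a b m n : R) - (cpOdd a b m n : R) := by
  simp only [copartitionGF, coeff_mk, one_pow, mul_one]
  exact finsum_mem_neg_one_pow (finite_cpSet ha hb hm n) _

end GeneratingFunction

section Positivity

/-- The power series that are congruent modulo `X ^ N` to a power series in `X ^ d` with
nonnegative coefficients. -/
def nonnegOnMultiples (R : Type*) [CommSemiring R] [PartialOrder R] [IsOrderedRing R] (d N : ℕ) :
    Subsemiring R⟦X⟧ where
  carrier := {F | ∀ n < N, 0 ≤ coeff n F ∧ (¬ d ∣ n → coeff n F = 0)}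
  zero_mem' := by simp
  one_mem' n _ := by
    rw [coeff_one]
    split_ifs with hn
    · simp [hn]
    · simp
  add_mem' hF hG n hn := by
    rw [map_add]
    exact ⟨add_nonneg (hF n hn).1 (hG n hn).1, fun hd ↦ by simp [(hF n hn).2 hd, (hG n hn).2 hd]⟩
  mul_mem' {F G} hF hG n hn := by
    rw [coeff_mul]
    have lt_of_mem {p} (hp : p ∈ Finset.HasAntidiagonal.antidiagonal n) : p.1 < N ∧ p.2 < N := by
      have := Finset.HasAntidiagonal.mem_antidiagonal.1 hp
      lia
    refine ⟨Finset.sum_nonneg fun p hp ↦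
      mul_nonneg (hF p.1 (lt_of_mem hp).1).1 (hG p.2 (lt_of_mem hp).2).1, fun hd ↦
      Finset.sum_eq_zero fun p hp ↦ ?_⟩
    by_cases hd₁ : d ∣ p.1
    · have hd₂ : ¬ d ∣ p.2 := fun hd₂ ↦
        hd (Finset.HasAntidiagonal.mem_antidiagonal.1 hp ▸ dvd_add hd₁ hd₂)
      rw [(hG p.2 (lt_of_mem hp).2).2 hd₂, mul_zero]
    · rw [(hF p.1 (lt_of_mem hp).1).2 hd₁, zero_mul]

variable {R : Type*} {d k N : ℕ}

lemma X_pow_mem_nonnegOnMultiples [CommSemiring R] [PartialOrder R] [IsOrderedRing R] (hd : d ∣ k) :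
    (X ^ k : R⟦X⟧) ∈ nonnegOnMultiples R d N := by
  intro n _
  rw [coeff_X_pow]
  split_ifs with hn
  · simp [hn, hd]
  · simp

variable [CommRing R] [PartialOrder R] [IsOrderedRing R]

lemma mem_nonnegOnMultiples_of_mul_one_sub_X_pow {F : R⟦X⟧} (hk : 0 < k) (hd : d ∣ k)
    (hF : F * (1 - X ^ k) ∈ nonnegOnMultiples R d N) : F ∈ nonnegOnMultiples R d N := by
  intro n
  induction n using Nat.strong_induction_on with
  | _ n ih =>
    intro hn
    have hcoeff : coeff n F = coeff n (F * (1 - X ^ k)) + coeff n (F * X ^ k) := by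
      rw [← map_add]
      ring_nf
    have ⟨hnonneg, hzero⟩ := hF n hn
    rw [hcoeff, coeff_mul_X_pow']
    split_ifs with hkn
    · have ⟨hnonneg', hzero'⟩ := ih (n - k) (by lia) (by lia)
      refine ⟨add_nonneg hnonneg hnonneg', fun hdn ↦ ?_⟩
      rw [hzero hdn, hzero' fun h ↦ hdn ((Nat.dvd_sub_iff_left hkn hd).1 h), add_zero]
    · simpa using hF n hn

lemma copartitionGF_mem_nonnegOnMultiples {a m : ℕ} (ha : 0 < a) (hm : 0 < m) (hda : d ∣ 2 * a)
    (hdm : d ∣ m) : copartitionGF (-1 : R) 1 a a m ∈ nonnegOnMultiples R d N := by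
  by_cases hNa : N ≤ a
  · intro n hn
    rw [coeff_copartitionGF_eq_coeff_one _ _ hm (by lia) (by lia)]
    exact one_mem (nonnegOnMultiples R d N) n hn
  · refine mem_nonnegOnMultiples_of_mul_one_sub_X_pow (by lia) hda ?_
    rw [copartitionGF_neg_one_one_mul ha hm]
    have hda' : d ∣ 2 * (a + m) := mul_add 2 a m ▸ dvd_add hda (hdm.mul_left 2)
    exact mul_mem (copartitionGF_mem_nonnegOnMultiples (Nat.add_pos_left ha m) hm hda' hdm) <|
      mul_mem (add_mem (one_mem _) (X_pow_mem_nonnegOnMultiples hda))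
        (add_mem (one_mem _) (X_pow_mem_nonnegOnMultiples (dvd_add hda hdm)))
termination_by N - a

end Positivity

theorem stmt0_general {a m : ℕ} (ha : 0 < a) (hm : 0 < m) (n : ℕ) :
    cpOdd a a m n ≤ cpEven a a m n ∧
      (¬ (2 * a).gcd m ∣ n → cpOdd a a m n = cpEven a a m n) := by
  have ⟨hnonneg, hzero⟩ := copartitionGF_mem_nonnegOnMultiples (R := ℤ) (N := n + 1) ha hm
    (Nat.gcd_dvd_left (2 * a) m) (Nat.gcd_dvd_right (2 * a) m) n n.lt_succ_self
  rw [coeff_copartitionGF_neg_one_one ha ha hm] at hnonneg hzero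
  exact ⟨by lia, fun hn ↦ by have := hzero hn; lia⟩

theorem stmt0 (n : ℕ) :
    (Even n → cpOdd 1 1 2 n ≤ cpEven 1 1 2 n) ∧
    (Odd n → cpOdd 1 1 2 n = cpEven 1 1 2 n) := by
  have ⟨hle, heq⟩ := stmt0_general (a := 1) (m := 2) one_pos two_pos n
  exact ⟨fun _ ↦ hle, fun hn ↦ heq (by simpa using hn.not_two_dvd_nat)⟩
end

section
/- For every nonnegative integer n, cp^e_{1,1,2}(n) − cp^o_{1,1,2}(n) equals the number of pairs (μ,ν) of partitions with |μ|+|ν| = n such that μ has distinct parts all of which are even, and every part of ν is ≡ 2 (mod 4). -/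
/-! Write the parts of a partition in a residue class as `a + m * k` and record only the `k`.
Let `G a b` be the generating function of `(a,b,m)`-copartitions with weight `x ^ ν(γ) * y ^ ν(σ)`.
A copartition either has no part `b` in its sky, or arises from an `(a + m, b, m)`-copartition by
adding such a part, so `G a b = y * X ^ b * G (a + m) b + G a (b + m)`. Combined with the same
relation for the ground this gives
`(1 - y * X ^ b) * G a b = (1 - x * y * X ^ (a + b)) * G a (b + m)`.
For `x = -1`, `y = 1` two such steps express `(1 - X ^ (2 * a)) * G a a` as a multiple of
`G (a + m) (a + m)`. The generating function of the pairs `(μ, ν)`, where `μ` has distinct parts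
`2 * a + m * k` and `ν` has parts `2 * a + 2 * m * k`, satisfies the same recurrence in `a`. Both
are `1` modulo a power of `X` growing with `a`, so iterating the recurrence shows that they agree.
-/

open PowerSeries
open scoped PowerSeries.WithPiTopology

section GeneratingFunctions

variable {ι R : Type*} [CommRing R] [TopologicalSpace R] {s : ι → ℕ}

theorem summable_monomial (hs : ∀ n, {i | s i = n}.Finite) (w : ι → R) :
    Summable fun i ↦ monomial (s i) (w i) := by
  refine (WithPiTopology.summable_iff_summable_coeff R).2 fun n ↦
    summable_of_hasFiniteSupport ((hs n).subset fun i hi ↦ ?_)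
  by_contra hne
  exact hi ((coeff_monomial n (s i) _).trans (if_neg (Ne.symm hne)))

theorem coeff_tsum_monomial [T2Space R] (hs : ∀ n, {i | s i = n}.Finite) (w : ι → R) (n : ℕ) :
    coeff n (∑' i, monomial (s i) (w i)) = ∑ i ∈ (hs n).toFinset, w i := by
  have hsum := (WithPiTopology.hasSum_iff_hasSum_coeff R).1 (summable_monomial hs w).hasSum n
  simp only [coeff_monomial] at hsum
  rw [← hsum.tsum_eq, tsum_eq_sum (s := (hs n).toFinset) fun i hi ↦
    if_neg (by simpa [eq_comm] using hi)]
  exact Finset.sum_congr rfl fun i hi ↦ if_pos (by simpa [eq_comm] using hi)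

theorem X_pow_dvd_tsum_monomial_sub_one [T2Space R] (hs : ∀ n, {i | s i = n}.Finite) {w : ι → R}
    {i₀ : ι} (hs₀ : s i₀ = 0) (hw₀ : w i₀ = 1) {d : ℕ} (hd : ∀ i ≠ i₀, d ≤ s i) :
    (X : R⟦X⟧) ^ d ∣ ∑' i, monomial (s i) (w i) - 1 := by
  refine X_pow_dvd_iff.2 fun k hk ↦ ?_
  have hfiber : ∀ i, s i = k → i = i₀ := fun i hi ↦ by_contra fun hne ↦ by
    have := hd i hne
    omega
  rw [map_sub, sub_eq_zero, coeff_tsum_monomial hs, coeff_one]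
  split_ifs with hk₀
  · rw [Finset.sum_eq_single i₀ (fun i hi hne ↦ absurd (hfiber i (by simpa using hi)) hne)
      (fun h ↦ absurd (by simp [hs₀, hk₀]) h), hw₀]
  · refine Finset.sum_eq_zero fun i hi ↦ absurd ?_ hk₀
    have hi : s i = k := by simpa using hi
    rw [← hi, hfiber i hi, hs₀]

end GeneratingFunctions

theorem eq_zero_of_dvd_succ_of_X_pow_dvd {R : Type*} [CommRing R] {D : ℕ → R⟦X⟧}
    (hdvd : ∀ j, D (j + 1) ∣ D j) (hX : ∀ j, X ^ j ∣ D j) : D 0 = 0 := by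
  have hD (j : ℕ) : D j ∣ D 0 := by
    induction j with
    | zero => rfl
    | succ j ih => exact (hdvd j).trans ih
  ext n
  exact X_pow_dvd_iff.1 ((hX (n + 1)).trans (hD (n + 1))) n n.lt_succ_self

theorem isUnit_one_sub_X_pow {R : Type*} [CommRing R] {n : ℕ} (hn : 0 < n) :
    IsUnit (1 - X ^ n : R⟦X⟧) :=
  PowerSeries.isUnit_iff_constantCoeff.2 (by simp [hn.ne'])

section SmallestPart

/-- Splits the multisets of natural numbers by whether `0` occurs. -/
noncomputable def multisetNatEquiv : Multiset ℕ ⊕ Multiset ℕ ≃ Multiset ℕ :=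
  Equiv.ofBijective (Sum.elim (0 ::ₘ ·) (Multiset.map Nat.succ)) <| by
    constructor
    · refine Function.Injective.sumElim (fun _ _ ↦ (Multiset.cons_inj_right 0).1)
        (Multiset.map_injective Nat.succ_injective) fun s t h ↦ ?_
      have : 0 ∈ t.map Nat.succ := h ▸ Multiset.mem_cons_self 0 s
      simp at this
    · intro s
      by_cases h : 0 ∈ s
      · exact ⟨.inl (s.erase 0), Multiset.cons_erase h⟩
      · refine ⟨.inr (s.map Nat.pred), ?_⟩
        rw [Sum.elim_inr, Multiset.map_map]
        exact (Multiset.map_congr rfl fun k hk ↦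
          Nat.succ_pred (ne_of_mem_of_not_mem hk h)).trans s.map_id

/-- Splits the finite sets of natural numbers by whether `0` occurs. -/
noncomputable def finsetNatEquiv : Finset ℕ ⊕ Finset ℕ ≃ Finset ℕ :=
  Equiv.ofBijective
    (Sum.elim (fun s ↦ (s.map (addRightEmbedding 1)).cons 0 (by simp))
      (Finset.map (addRightEmbedding 1))) <| by
    constructor
    · refine Function.Injective.sumElim (fun s t h ↦ ?_) (Finset.map_injective _) fun s t h ↦ ?_
      · refine Finset.map_injective (addRightEmbedding 1) (Finset.val_injective ?_)
        exact (Multiset.cons_inj_right 0).1 (congrArg Finset.val h)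
      · simpa using congrArg (0 ∈ ·) h
    · intro s
      by_cases h : 0 ∈ s
      · refine ⟨.inl (s.preimage (· + 1) (add_left_injective 1).injOn), ?_⟩
        ext (_ | k) <;> simp [h]
      · refine ⟨.inr (s.preimage (· + 1) (add_left_injective 1).injOn), ?_⟩
        ext (_ | k) <;> simp [h]

variable {M β : Type*} [AddCommMonoid M] [TopologicalSpace M] [ContinuousAdd M] {u v : M}

theorem hasSum_prod_multiset_nat {f : β × Multiset ℕ → M}
    (h₀ : HasSum (fun p : β × Multiset ℕ ↦ f (p.1, 0 ::ₘ p.2)) u)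
    (h₁ : HasSum (fun p : β × Multiset ℕ ↦ f (p.1, p.2.map Nat.succ)) v) : HasSum f (u + v) := by
  let e := (Equiv.prodSumDistrib β _ _).symm.trans ((Equiv.refl β).prodCongr multisetNatEquiv)
  exact e.hasSum_iff.1 (h₀.sum h₁)

theorem hasSum_finset_nat_prod {f : Finset ℕ × β → M}
    (h₀ : HasSum (fun p : Finset ℕ × β ↦
      f ((p.1.map (addRightEmbedding 1)).cons 0 (by simp), p.2)) u)
    (h₁ : HasSum (fun p : Finset ℕ × β ↦ f (p.1.map (addRightEmbedding 1), p.2)) v) :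
    HasSum f (u + v) := by
  let e := (Equiv.sumProdDistrib _ _ β).symm.trans (finsetNatEquiv.prodCongr (Equiv.refl β))
  exact e.hasSum_iff.1 (h₀.sum h₁)

end SmallestPart

section ArithmeticProgression

/-- The multiset of parts `a + m * k` for `k ∈ s`. Partitions into parts `≥ a` congruent to `a`
modulo `m` are encoded by the multisets `s` of natural numbers. -/
def progParts (a m : ℕ) (s : Multiset ℕ) : Multiset ℕ :=
  s.map (a + m * ·)

variable {a m : ℕ}

@[simp]
theorem card_progParts (s : Multiset ℕ) : (progParts a m s).card = s.card :=
  Multiset.card_map _ _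

theorem sum_progParts (s : Multiset ℕ) : (progParts a m s).sum = a * s.card + m * s.sum := by
  rw [progParts, Multiset.sum_map_add, Multiset.sum_map_mul_left]
  simp [mul_comm]

theorem card_add_sum_le_sum_progParts (ha : 0 < a) (hm : 0 < m) (s : Multiset ℕ) :
    s.card + s.sum ≤ (progParts a m s).sum := by
  rw [sum_progParts]
  gcongr <;> exact Nat.le_mul_of_pos_left _ ‹_›

theorem le_sum_progParts {s : Multiset ℕ} (hs : s ≠ 0) : a ≤ (progParts a m s).sum := by
  rw [sum_progParts]
  exact (Nat.le_mul_of_pos_right a (Multiset.card_pos.2 hs)).trans (Nat.le_add_right _ _)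

theorem progParts_injective (hm : 0 < m) : Function.Injective (progParts a m) :=
  Multiset.map_injective ((add_right_injective a).comp (mul_right_injective₀ hm.ne'))

theorem nodup_progParts_iff (hm : 0 < m) {s : Multiset ℕ} : (progParts a m s).Nodup ↔ s.Nodup :=
  Multiset.nodup_map_iff_of_injective
    ((add_right_injective a).comp (mul_right_injective₀ hm.ne'))

theorem mem_range_progParts {t : Multiset ℕ} :
    t ∈ Set.range (progParts a m) ↔ ∀ x ∈ t, a ≤ x ∧ x % m = a % m := by
  constructor
  · rintro ⟨s, rfl⟩ x hx
    obtain ⟨k, -, rfl⟩ := Multiset.mem_map.1 hx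
    simp
  · intro ht
    refine ⟨t.map fun x ↦ (x - a) / m, ?_⟩
    rw [progParts, Multiset.map_map]
    refine (Multiset.map_congr rfl fun x hx ↦ ?_).trans t.map_id
    obtain ⟨hax, hmod⟩ := ht x hx
    have hdvd : m ∣ x - a := (Nat.modEq_iff_dvd' hax).1 hmod.symm
    simp [Nat.mul_div_cancel' hdvd, hax]

theorem finite_setOf_card_add_sum_le (n : ℕ) : {s : Multiset ℕ | s.card + s.sum ≤ n}.Finite := by
  refine (Set.finite_Iic (n • Multiset.range (n + 1))).subset fun s hs ↦ ?_
  simp only [Set.mem_ofPred_eq] at hs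
  refine Multiset.le_iff_count.2 fun k ↦ ?_
  by_cases hk : k ∈ s
  · have hkn : k < n + 1 := by
      have := Multiset.le_sum_of_mem hk
      omega
    rw [Multiset.count_nsmul, Multiset.count_eq_one_of_mem (Multiset.nodup_range _)
      (Multiset.mem_range.2 hkn), mul_one]
    exact (Multiset.count_le_card k s).trans (by omega)
  · simp [Multiset.count_eq_zero_of_notMem hk]

end ArithmeticProgression

section Copartitions

/-- The `(a,b,m)`-copartition with ground `progParts a m p.1` and sky `progParts b m p.2`;
these two partitions determine `ρ`. -/
def copartitionOf (a b m : ℕ) (p : Multiset ℕ × Multiset ℕ) :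
    Multiset ℕ × Multiset ℕ × Multiset ℕ :=
  (progParts a m p.1, Multiset.replicate p.2.card (m * p.1.card), progParts b m p.2)

/-- The size of the copartition `copartitionOf a b m p`. -/
def copartitionSize (a b m : ℕ) (p : Multiset ℕ × Multiset ℕ) : ℕ :=
  (progParts a m p.1).sum + p.2.card * (m * p.1.card) + (progParts b m p.2).sum

variable {a b m : ℕ}

theorem copartitionSize_swap (p : Multiset ℕ × Multiset ℕ) :
    copartitionSize a b m p.swap = copartitionSize b a m p := by
  simp only [copartitionSize, Prod.fst_swap, Prod.snd_swap]
  ring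

/-- Removing the smallest part of the sky removes one part `m * ν(γ)` from `ρ`, which is
redistributed by adding `m` to every part of the ground. -/
theorem copartitionSize_cons_zero (p : Multiset ℕ × Multiset ℕ) :
    copartitionSize a b m (p.1, 0 ::ₘ p.2) = b + copartitionSize (a + m) b m p := by
  simp only [copartitionSize, sum_progParts, Multiset.card_cons, Multiset.sum_cons]
  ring

theorem copartitionSize_map_succ (p : Multiset ℕ × Multiset ℕ) :
    copartitionSize a b m (p.1, p.2.map Nat.succ) = copartitionSize a (b + m) m p := by
  simp only [copartitionSize, sum_progParts, Multiset.card_map, Nat.succ_eq_add_one,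
    Multiset.sum_map_add, Multiset.map_id', Multiset.map_const', Multiset.sum_replicate,
    smul_eq_mul]
  ring

theorem finite_copartitionSize_eq (ha : 0 < a) (hb : 0 < b) (hm : 0 < m) (n : ℕ) :
    {p | copartitionSize a b m p = n}.Finite := by
  refine ((finite_setOf_card_add_sum_le n).prod (finite_setOf_card_add_sum_le n)).subset ?_
  rintro p rfl
  have hγ := card_add_sum_le_sum_progParts ha hm p.1
  have hσ := card_add_sum_le_sum_progParts hb hm p.2
  simp only [copartitionSize, Set.mem_prod, Set.mem_ofPred_eq]
  omega

variable {R : Type*} [CommRing R] [TopologicalSpace R]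

/-- The generating function of `(a,b,m)`-copartitions weighted by `x ^ ν(γ) * y ^ ν(σ)`. -/
noncomputable def copartitionGenFun (x y : R) (a b m : ℕ) : R⟦X⟧ :=
  ∑' p, monomial (copartitionSize a b m p) (x ^ p.1.card * y ^ p.2.card)

theorem copartitionGenFun_swap (x y : R) (a b m : ℕ) :
    copartitionGenFun y x b a m = copartitionGenFun x y a b m := by
  rw [copartitionGenFun, ← (Equiv.prodComm _ _).tsum_eq]
  refine tsum_congr fun p ↦ ?_
  rw [Equiv.prodComm_apply, copartitionSize_swap, Prod.fst_swap, Prod.snd_swap, mul_comm]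

theorem hasSum_copartitionGenFun (x y : R) (ha : 0 < a) (hb : 0 < b) (hm : 0 < m) :
    HasSum (fun p ↦ monomial (copartitionSize a b m p) (x ^ p.1.card * y ^ p.2.card))
      (copartitionGenFun x y a b m) :=
  (summable_monomial (finite_copartitionSize_eq ha hb hm) _).hasSum

variable [T2Space R]

theorem X_pow_min_dvd_copartitionGenFun_sub_one (x y : R) (ha : 0 < a) (hb : 0 < b)
    (hm : 0 < m) : X ^ min a b ∣ copartitionGenFun x y a b m - 1 := by
  refine X_pow_dvd_tsum_monomial_sub_one (i₀ := (0, 0)) (finite_copartitionSize_eq ha hb hm)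
    (by simp [copartitionSize, progParts]) (by simp) fun ⟨γ, σ⟩ hne ↦ ?_
  have hγσ : γ ≠ 0 ∨ σ ≠ 0 := by simpa [or_iff_not_imp_left] using hne
  simp only [copartitionSize]
  rcases hγσ with hγ | hσ
  · have := le_sum_progParts (a := a) (m := m) hγ
    omega
  · have := le_sum_progParts (a := b) (m := m) hσ
    omega

variable [IsTopologicalRing R]

theorem copartitionGenFun_eq_add (x y : R) (ha : 0 < a) (hb : 0 < b) (hm : 0 < m) :
    copartitionGenFun x y a b m =
      C y * X ^ b * copartitionGenFun x y (a + m) b m + copartitionGenFun x y a (b + m) m := by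
  refine (hasSum_prod_multiset_nat ?_ ?_).tsum_eq
  · have hterm (p : Multiset ℕ × Multiset ℕ) :
        monomial (copartitionSize a b m (p.1, 0 ::ₘ p.2)) (x ^ p.1.card * y ^ (0 ::ₘ p.2).card) =
          C y * X ^ b *
            monomial (copartitionSize (a + m) b m p) (x ^ p.1.card * y ^ p.2.card) := by
      rw [copartitionSize_cons_zero, Multiset.card_cons, ← monomial_eq_C_mul_X_pow,
        monomial_mul_monomial, pow_succ', mul_left_comm]
    exact ((hasSum_copartitionGenFun x y (Nat.add_pos_left ha m) hb hm).mul_left _).congr_fun hterm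
  · simpa only [copartitionSize_map_succ, Multiset.card_map] using
      hasSum_copartitionGenFun x y ha (Nat.add_pos_left hb m) hm

theorem one_sub_mul_copartitionGenFun (x y : R) (ha : 0 < a) (hb : 0 < b) (hm : 0 < m) :
    (1 - C y * X ^ b) * copartitionGenFun x y a b m =
      (1 - C (x * y) * X ^ (a + b)) * copartitionGenFun x y a (b + m) m := by
  have hσ := copartitionGenFun_eq_add x y ha hb hm
  have hγ := copartitionGenFun_eq_add y x hb ha hm
  simp only [copartitionGenFun_swap x y] at hγ
  rw [map_mul, pow_add]
  linear_combination hσ - C y * X ^ b * hγ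

theorem one_sub_mul_copartitionGenFun_neg_one_one (ha : 0 < a) (hm : 0 < m) :
    (1 - X ^ (2 * a)) * copartitionGenFun (-1 : R) 1 a a m =
      (1 + X ^ (2 * a)) * (1 + X ^ (2 * a + m)) *
        copartitionGenFun (-1 : R) 1 (a + m) (a + m) m := by
  have hσ := one_sub_mul_copartitionGenFun (-1 : R) 1 ha ha hm
  have hγ := one_sub_mul_copartitionGenFun 1 (-1 : R) (Nat.add_pos_left ha m) ha hm
  simp only [copartitionGenFun_swap (-1 : R) 1, mul_one, one_mul, map_neg, map_one] at hσ hγ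
  linear_combination (1 + X ^ a) * hσ + (1 + X ^ (2 * a)) * hγ

end Copartitions

section CountingCopartitions

variable {a b m : ℕ}

theorem copartitionOf_injective (hm : 0 < m) : Function.Injective (copartitionOf a b m) := by
  intro p q h
  simp only [copartitionOf, Prod.mk.injEq] at h
  exact Prod.ext (progParts_injective hm h.1) (progParts_injective hm h.2.2)

theorem image_copartitionOf (a b m n : ℕ) :
    copartitionOf a b m '' {p | copartitionSize a b m p = n} = cpSet a b m n := by
  ext ⟨γ, ρ, σ⟩
  constructor
  · rintro ⟨p, hp, h⟩
    obtain ⟨rfl, rfl, rfl⟩ : _ = γ ∧ _ = ρ ∧ _ = σ := by simpa [copartitionOf] using h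
    refine ⟨⟨mem_range_progParts.1 ⟨_, rfl⟩, mem_range_progParts.1 ⟨_, rfl⟩, by simp⟩, ?_⟩
    simpa [copartitionSize] using hp
  · rintro ⟨⟨hγ, hσ, hρ⟩, hn⟩
    obtain ⟨s, rfl⟩ := mem_range_progParts.2 hγ
    obtain ⟨t, rfl⟩ := mem_range_progParts.2 hσ
    obtain rfl : ρ = Multiset.replicate t.card (m * s.card) := by simpa using hρ
    exact ⟨(s, t), by simpa [copartitionSize] using hn, rfl⟩

theorem ncard_sep_cpSet (ha : 0 < a) (hb : 0 < b) (hm : 0 < m) (n : ℕ) (P : ℕ → Prop)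
    [DecidablePred P] :
    {t ∈ cpSet a b m n | P t.1.card}.ncard =
      ((finite_copartitionSize_eq ha hb hm n).toFinset.filter fun p ↦ P p.1.card).card := by
  rw [← image_copartitionOf, ← Set.ncard_coe_finset,
    ← Set.ncard_image_of_injective _ (copartitionOf_injective (a := a) (b := b) hm)]
  congr 1
  ext t
  constructor
  · rintro ⟨⟨p, hp, rfl⟩, hP⟩
    exact ⟨p, by simpa [copartitionOf] using And.intro hp hP, rfl⟩
  · rintro ⟨p, hp, rfl⟩
    have hp : copartitionSize a b m p = n ∧ P p.1.card := by simpa using hp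
    exact ⟨⟨p, hp.1, rfl⟩, by simpa [copartitionOf] using hp.2⟩

theorem sum_neg_one_pow_eq_card_sub_card {ι : Type*} (s : Finset ι) (f : ι → ℕ) :
    ∑ i ∈ s, (-1 : ℤ) ^ f i =
      (s.filter fun i ↦ Even (f i)).card - (s.filter fun i ↦ Odd (f i)).card := by
  rw [Finset.card_filter, Finset.card_filter]
  push_cast
  rw [← Finset.sum_sub_distrib]
  refine Finset.sum_congr rfl fun i _ ↦ ?_
  rcases Nat.even_or_odd (f i) with h | h
  · simp [h, Nat.not_odd_iff_even.2 h]
  · simp [h, Nat.not_even_iff_odd.2 h]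

theorem cpEven_sub_cpOdd (ha : 0 < a) (hb : 0 < b) (hm : 0 < m) (n : ℕ) :
    (cpEven a b m n : ℤ) - cpOdd a b m n = coeff n (copartitionGenFun (-1 : ℤ) 1 a b m) := by
  rw [cpEven, cpOdd, ncard_sep_cpSet ha hb hm n Even, ncard_sep_cpSet ha hb hm n Odd,
    ← sum_neg_one_pow_eq_card_sub_card, copartitionGenFun,
    coeff_tsum_monomial (finite_copartitionSize_eq ha hb hm)]
  simp only [one_pow, mul_one]

end CountingCopartitions

section DistinctPairs

/-- The pair of partitions `(progParts c m p.1, progParts d k p.2)`, the first of which has distinct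
parts when `0 < m`. -/
def distinctPairOf (c d m k : ℕ) (p : Finset ℕ × Multiset ℕ) : Multiset ℕ × Multiset ℕ :=
  (progParts c m p.1.val, progParts d k p.2)

/-- The total size of the pair `distinctPairOf c d m k p`. -/
def distinctPairSize (c d m k : ℕ) (p : Finset ℕ × Multiset ℕ) : ℕ :=
  (progParts c m p.1.val).sum + (progParts d k p.2).sum

variable {c d m k : ℕ}

theorem distinctPairSize_cons_zero (p : Finset ℕ × Multiset ℕ) :
    distinctPairSize c d m k ((p.1.map (addRightEmbedding 1)).cons 0 (by simp), p.2) =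
      c + distinctPairSize (c + m) d m k p := by
  simp only [distinctPairSize, sum_progParts, Finset.cons_val, Finset.map_val,
    addRightEmbedding_apply, Multiset.card_cons, Multiset.sum_cons, Multiset.card_map,
    Multiset.sum_map_add, Multiset.map_id', Multiset.map_const', Multiset.sum_replicate,
    smul_eq_mul]
  ring

theorem distinctPairSize_map_add_one (p : Finset ℕ × Multiset ℕ) :
    distinctPairSize c d m k (p.1.map (addRightEmbedding 1), p.2) =
      distinctPairSize (c + m) d m k p := by
  simp only [distinctPairSize, sum_progParts, Finset.map_val, addRightEmbedding_apply,
    Multiset.card_map, Multiset.sum_map_add, Multiset.map_id', Multiset.map_const',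
    Multiset.sum_replicate, smul_eq_mul]
  ring

theorem distinctPairSize_cons_zero_right (p : Finset ℕ × Multiset ℕ) :
    distinctPairSize c d m k (p.1, 0 ::ₘ p.2) = d + distinctPairSize c d m k p := by
  simp only [distinctPairSize, sum_progParts, Multiset.card_cons, Multiset.sum_cons]
  ring

theorem distinctPairSize_map_succ_right (p : Finset ℕ × Multiset ℕ) :
    distinctPairSize c d m k (p.1, p.2.map Nat.succ) = distinctPairSize c (d + k) m k p := by
  simp only [distinctPairSize, sum_progParts, Multiset.card_map, Nat.succ_eq_add_one,
    Multiset.sum_map_add, Multiset.map_id', Multiset.map_const', Multiset.sum_replicate,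
    smul_eq_mul]
  ring

theorem finite_distinctPairSize_eq (hc : 0 < c) (hd : 0 < d) (hm : 0 < m) (hk : 0 < k) (n : ℕ) :
    {p | distinctPairSize c d m k p = n}.Finite := by
  have hfin := (finite_setOf_card_add_sum_le n).prod (finite_setOf_card_add_sum_le n)
  have hinj : Function.Injective
      (Prod.map Finset.val id : Finset ℕ × Multiset ℕ → Multiset ℕ × Multiset ℕ) :=
    Finset.val_injective.prodMap Function.injective_id
  refine (hfin.preimage hinj.injOn).subset ?_
  rintro p rfl
  have hμ := card_add_sum_le_sum_progParts hc hm p.1.val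
  have hν := card_add_sum_le_sum_progParts hd hk p.2
  simp only [distinctPairSize, Set.mem_preimage, Set.mem_prod, Set.mem_ofPred_eq, Prod.map_fst,
    Prod.map_snd, id]
  omega

theorem distinctPairOf_injective (hm : 0 < m) (hk : 0 < k) :
    Function.Injective (distinctPairOf c d m k) :=
  ((progParts_injective hm).comp Finset.val_injective).prodMap (progParts_injective hk)

theorem image_distinctPairOf (c d : ℕ) (hm : 0 < m) (k n : ℕ) :
    distinctPairOf c d m k '' {p | distinctPairSize c d m k p = n} =
      {p | p.1.Nodup ∧ (∀ x ∈ p.1, c ≤ x ∧ x % m = c % m) ∧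
        (∀ x ∈ p.2, d ≤ x ∧ x % k = d % k) ∧ p.1.sum + p.2.sum = n} := by
  ext ⟨μ, ν⟩
  constructor
  · rintro ⟨p, hp, h⟩
    obtain ⟨rfl, rfl⟩ : _ = μ ∧ _ = ν := by simpa [distinctPairOf] using h
    exact ⟨(nodup_progParts_iff hm).2 p.1.nodup, mem_range_progParts.1 ⟨_, rfl⟩,
      mem_range_progParts.1 ⟨_, rfl⟩, hp⟩
  · rintro ⟨hnodup, hμ, hν, hn⟩
    obtain ⟨s, rfl⟩ := mem_range_progParts.2 hμ
    obtain ⟨t, rfl⟩ := mem_range_progParts.2 hν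
    exact ⟨(⟨s, (nodup_progParts_iff hm).1 hnodup⟩, t), hn, rfl⟩

variable {R : Type*} [CommRing R] [TopologicalSpace R]

variable (R) in
/-- The generating function of the pairs `distinctPairOf c d m k p` by total size. -/
noncomputable def distinctPairGenFun (c d m k : ℕ) : R⟦X⟧ :=
  ∑' p, monomial (distinctPairSize c d m k p) 1

theorem hasSum_distinctPairGenFun (hc : 0 < c) (hd : 0 < d) (hm : 0 < m) (hk : 0 < k) :
    HasSum (fun p ↦ monomial (distinctPairSize c d m k p) 1) (distinctPairGenFun R c d m k) :=
  (summable_monomial (finite_distinctPairSize_eq hc hd hm hk) _).hasSum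

variable [T2Space R]

theorem X_pow_min_dvd_distinctPairGenFun_sub_one (hc : 0 < c) (hd : 0 < d) (hm : 0 < m)
    (hk : 0 < k) : X ^ min c d ∣ distinctPairGenFun R c d m k - 1 := by
  refine X_pow_dvd_tsum_monomial_sub_one (i₀ := (∅, 0)) (finite_distinctPairSize_eq hc hd hm hk)
    (by simp [distinctPairSize, progParts]) rfl fun ⟨μ, ν⟩ hne ↦ ?_
  have hμν : μ.val ≠ 0 ∨ ν ≠ 0 := by simpa [or_iff_not_imp_left] using hne
  simp only [distinctPairSize]
  rcases hμν with hμ | hν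
  · have := le_sum_progParts (a := c) (m := m) hμ
    omega
  · have := le_sum_progParts (a := d) (m := k) hν
    omega

theorem ncard_distinctPairs (hc : 0 < c) (hd : 0 < d) (hm : 0 < m) (hk : 0 < k) (n : ℕ) :
    ({p : Multiset ℕ × Multiset ℕ | p.1.Nodup ∧ (∀ x ∈ p.1, c ≤ x ∧ x % m = c % m) ∧
      (∀ x ∈ p.2, d ≤ x ∧ x % k = d % k) ∧ p.1.sum + p.2.sum = n}.ncard : R) =
      coeff n (distinctPairGenFun R c d m k) := by
  have hfin := finite_distinctPairSize_eq hc hd hm hk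
  rw [← image_distinctPairOf c d hm,
    Set.ncard_image_of_injective _ (distinctPairOf_injective hm hk), distinctPairGenFun,
    coeff_tsum_monomial hfin, Set.ncard_eq_toFinset_card _ (hfin n)]
  simp

variable [IsTopologicalRing R]

theorem distinctPairGenFun_eq_one_add_mul (hc : 0 < c) (hd : 0 < d) (hm : 0 < m) (hk : 0 < k) :
    distinctPairGenFun R c d m k = (1 + X ^ c) * distinctPairGenFun R (c + m) d m k := by
  have hsum := hasSum_distinctPairGenFun (R := R) (Nat.add_pos_left hc m) hd hm hk
  rw [add_comm, add_mul, one_mul]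
  refine (hasSum_finset_nat_prod ?_ ?_).tsum_eq
  · have hterm (p : Finset ℕ × Multiset ℕ) :
        monomial (distinctPairSize c d m k
            ((p.1.map (addRightEmbedding 1)).cons 0 (by simp), p.2)) (1 : R) =
          X ^ c * monomial (distinctPairSize (c + m) d m k p) 1 := by
      rw [distinctPairSize_cons_zero, X_pow_eq, monomial_mul_monomial, one_mul]
    exact (hsum.mul_left _).congr_fun hterm
  · simpa only [distinctPairSize_map_add_one] using hsum

theorem one_sub_mul_distinctPairGenFun (hc : 0 < c) (hd : 0 < d) (hm : 0 < m) (hk : 0 < k) :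
    (1 - X ^ d) * distinctPairGenFun R c d m k = distinctPairGenFun R c (d + k) m k := by
  have hsum := hasSum_distinctPairGenFun (R := R) hc hd hm hk
  have hsplit : distinctPairGenFun R c d m k =
      X ^ d * distinctPairGenFun R c d m k + distinctPairGenFun R c (d + k) m k := by
    refine (hasSum_prod_multiset_nat ?_ ?_).tsum_eq
    · have hterm (p : Finset ℕ × Multiset ℕ) :
          monomial (distinctPairSize c d m k (p.1, 0 ::ₘ p.2)) (1 : R) =
            X ^ d * monomial (distinctPairSize c d m k p) 1 := by
        rw [distinctPairSize_cons_zero_right, X_pow_eq, monomial_mul_monomial, one_mul]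
      exact (hsum.mul_left _).congr_fun hterm
    · simpa only [distinctPairSize_map_succ_right] using
        hasSum_distinctPairGenFun (R := R) hc (Nat.add_pos_left hd k) hm hk
  linear_combination hsplit

theorem one_sub_mul_distinctPairGenFun_two_mul (hc : 0 < c) (hm : 0 < m) :
    (1 - X ^ c) * distinctPairGenFun R c c m (2 * m) =
      (1 + X ^ c) * (1 + X ^ (c + m)) *
        distinctPairGenFun R (c + 2 * m) (c + 2 * m) m (2 * m) := by
  have h2m : 0 < 2 * m := Nat.mul_pos two_pos hm
  have hc' : 0 < c + m := Nat.add_pos_left hc m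
  have hd : 0 < c + 2 * m := Nat.add_pos_left hc _
  rw [one_sub_mul_distinctPairGenFun hc hc hm h2m, distinctPairGenFun_eq_one_add_mul hc hd hm h2m,
    distinctPairGenFun_eq_one_add_mul hc' hd hm h2m, mul_assoc, add_assoc c m m, ← two_mul]

end DistinctPairs

theorem copartitionGenFun_eq_distinctPairGenFun {R : Type*} [CommRing R] [TopologicalSpace R]
    [IsTopologicalRing R] [T2Space R] {a m : ℕ} (ha : 0 < a) (hm : 0 < m) :
    copartitionGenFun (-1 : R) 1 a a m = distinctPairGenFun R (2 * a) (2 * a) m (2 * m) := by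
  let D (j : ℕ) : R⟦X⟧ := copartitionGenFun (-1) 1 (a + j * m) (a + j * m) m -
    distinctPairGenFun R (2 * (a + j * m)) (2 * (a + j * m)) m (2 * m)
  have hpos (j : ℕ) : 0 < a + j * m := Nat.add_pos_left ha _
  have hdvd (j : ℕ) : D (j + 1) ∣ D j := by
    have hcop := one_sub_mul_copartitionGenFun_neg_one_one (R := R) (hpos j) hm
    have hpair := one_sub_mul_distinctPairGenFun_two_mul (R := R)
      (Nat.mul_pos two_pos (hpos j)) hm
    rw [← mul_add 2, add_assoc, ← Nat.succ_mul] at hpair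
    rw [add_assoc, ← Nat.succ_mul] at hcop
    rw [← (isUnit_one_sub_X_pow (Nat.mul_pos two_pos (hpos j))).dvd_mul_left]
    exact ⟨_, by rw [mul_sub, hcop, hpair, ← mul_sub, mul_comm]⟩
  have hX (j : ℕ) : X ^ j ∣ D j := by
    have hj : j ≤ a + j * m := (Nat.le_mul_of_pos_right j hm).trans (Nat.le_add_left _ _)
    have hcop := X_pow_min_dvd_copartitionGenFun_sub_one (-1 : R) 1 (hpos j) (hpos j) hm
    have hpair := X_pow_min_dvd_distinctPairGenFun_sub_one (R := R)
      (Nat.mul_pos two_pos (hpos j)) (Nat.mul_pos two_pos (hpos j)) hm (Nat.mul_pos two_pos hm)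
    rw [min_self] at hcop hpair
    have := dvd_sub ((pow_dvd_pow X hj).trans hcop) ((pow_dvd_pow X (by omega)).trans hpair)
    rwa [sub_sub_sub_cancel_right] at this
  simpa [D, sub_eq_zero] using eq_zero_of_dvd_succ_of_X_pow_dvd hdvd hX

theorem stmt13_general {a m : ℕ} (ha : 0 < a) (hm : 0 < m) (n : ℕ) :
    (cpEven a a m n : ℤ) - cpOdd a a m n =
      {p : Multiset ℕ × Multiset ℕ | p.1.Nodup ∧
        (∀ x ∈ p.1, 2 * a ≤ x ∧ x % m = 2 * a % m) ∧
        (∀ x ∈ p.2, 2 * a ≤ x ∧ x % (2 * m) = 2 * a % (2 * m)) ∧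
        p.1.sum + p.2.sum = n}.ncard := by
  have h2a : 0 < 2 * a := Nat.mul_pos two_pos ha
  rw [cpEven_sub_cpOdd ha ha hm, copartitionGenFun_eq_distinctPairGenFun ha hm,
    ncard_distinctPairs h2a h2a hm (Nat.mul_pos two_pos hm)]

theorem stmt13 (n : ℕ) :
    (cpEven 1 1 2 n : ℤ) - (cpOdd 1 1 2 n : ℤ) =
      ({p : Multiset ℕ × Multiset ℕ |
         p.1.Nodup ∧ (∀ x ∈ p.1, 0 < x ∧ Even x) ∧ (∀ x ∈ p.2, x % 4 = 2) ∧
         p.1.sum + p.2.sum = n}).ncard := by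
  have hμ (x : ℕ) : 0 < x ∧ Even x ↔ 2 * 1 ≤ x ∧ x % 2 = 2 * 1 % 2 := by grind
  have hν (x : ℕ) : x % 4 = 2 ↔ 2 * 1 ≤ x ∧ x % (2 * 2) = 2 * 1 % (2 * 2) := by omega
  simpa only [← hμ, ← hν] using stmt13_general one_pos two_pos n
end

section
/- For every positive integer n, let D_0(n) be the number of overpartitions (λ,S) of size n such that every even part of λ is less than every odd part of λ, every part size of λ other than the largest even part occurs an even number of times in λ, and either λ has no even part, or the largest even part of λ occurs an odd number of times and is ≡ 0 (mod 4); let D_2(n) be the number of overpartitions (λ,S) of size n such that every even part of λ is less than every odd part of λ, every part size of λ other than the largest even part occurs an even number of times in λ, and λ has an even part whose largest even part occurs an odd number of times and is ≡ 2 (mod 4). Then D_0(n) = D_2(n) if n is not divisible by 4, and D_0(n) ≥ D_2(n) if n is divisible by 4. -/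
/-- The largest even part of a partition (0 if there is no even part). -/
def largestEvenPart (lam : Multiset ℕ) : ℕ := (lam.filter (fun x => x % 2 = 0)).sup

/-- `D_0(n)` (Chern's `\overline{EO}*_0(n)`): the number of overpartitions `(λ, S)` of size
`n` such that every even part of `λ` is less than every odd part, every part size other
than the largest even part occurs an even number of times, and either `λ` has no even
part, or its largest even part occurs an odd number of times and is `≡ 0 (mod 4)`. -/
noncomputable def D0 (n : ℕ) : ℕ :=
  ({op : Multiset ℕ × Finset ℕ |
     (∀ x ∈ op.1, 0 < x) ∧ op.1.sum = n ∧ op.2 ⊆ op.1.toFinset ∧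
     (∀ x ∈ op.1, ∀ y ∈ op.1, Even x → Odd y → x < y) ∧
     (∀ x ∈ op.1, x ≠ largestEvenPart op.1 → Even (op.1.count x)) ∧
     ((¬ ∃ x ∈ op.1, Even x) ∨
       (Odd (op.1.count (largestEvenPart op.1)) ∧ largestEvenPart op.1 % 4 = 0))}).ncard

/-- `D_2(n)` (Chern's `\overline{EO}*_2(n)`): as `D_0(n)`, except that `λ` must have an
even part and its largest even part occurs an odd number of times and is `≡ 2 (mod 4)`. -/
noncomputable def D2 (n : ℕ) : ℕ :=
  ({op : Multiset ℕ × Finset ℕ |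
     (∀ x ∈ op.1, 0 < x) ∧ op.1.sum = n ∧ op.2 ⊆ op.1.toFinset ∧
     (∀ x ∈ op.1, ∀ y ∈ op.1, Even x → Odd y → x < y) ∧
     (∀ x ∈ op.1, x ≠ largestEvenPart op.1 → Even (op.1.count x)) ∧
     (∃ x ∈ op.1, Even x) ∧
     Odd (op.1.count (largestEvenPart op.1)) ∧ largestEvenPart op.1 % 4 = 2}).ncard

/-!
Write `x = X ^ 2` and `q = X ^ 4`. The overpartitions at hand whose largest even part is `2 * k`
have generating function `(-1; q)_k / (q; q)_k * x ^ k * (-x q ^ k; q)_∞ / (x q ^ k; q)_∞`, so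
`D0 - D2` is generated by the alternating sum of these series over `k`. Replace `-1` by a
parameter `a` in all of them and call the alternating sum `H a`. Shifting `a` twice gives
`H a = (1 - a q) ^ 2 * H (a q ^ 2)`, and `H 1 = 1`; this determines `H a` as the square of
`(a q; q ^ 2)_∞ / (q; q ^ 2)_∞`. At `a = -1` it is the square of the product of
`(1 + X ^ i) / (1 - X ^ i)` over `i ≡ 4 (mod 8)`, which has nonnegative coefficients and is a
series in `X ^ 4`. Since one coefficient at a time is compared, everything can be done modulo
`X ^ M`, where `X` is nilpotent and infinite sums and products are finite.
-/

namespace EvenOddOverpartition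

open Finset
open scoped Ring

section QSeries

variable {R : Type*} [CommRing R] {M : ℕ}

/-- The finite `q`-Pochhammer symbol `(a; q)_n`. -/
def qPochhammer (a q : R) (n : ℕ) : R := ∏ j ∈ range n, (1 - a * q ^ j)

lemma qPochhammer_succ (a q : R) (n : ℕ) :
    qPochhammer a q (n + 1) = qPochhammer a q n * (1 - a * q ^ n) :=
  prod_range_succ _ n

lemma qPochhammer_succ' (a q : R) (n : ℕ) :
    qPochhammer a q (n + 1) = (1 - a) * qPochhammer (a * q) q n := by
  simp only [qPochhammer, prod_range_succ', pow_zero, mul_one, pow_succ', ← mul_assoc]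
  exact mul_comm _ _

lemma qPochhammer_eq_one_sub_mul {q : R} (hq : q ^ M = 0) (a : R) :
    qPochhammer a q M = (1 - a) * qPochhammer (a * q) q M := by
  rw [← qPochhammer_succ', qPochhammer_succ, hq, mul_zero, sub_zero, mul_one]

lemma isUnit_one_sub_mul {a : R} (ha : IsNilpotent a) (b : R) : IsUnit (1 - a * b) :=
  ((Commute.all a b).isNilpotent_mul_right ha).isUnit_one_sub

lemma isUnit_qPochhammer {a : R} (ha : IsNilpotent a) (q : R) (n : ℕ) :
    IsUnit (qPochhammer a q n) :=
  IsUnit.prod_iff.2 fun j _ => isUnit_one_sub_mul ha (q ^ j)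

lemma map_qPochhammer {S : Type*} [CommRing S] (φ : R →+* S) (a q : R) (n : ℕ) :
    φ (qPochhammer a q n) = qPochhammer (φ a) (φ q) n := by
  simp only [qPochhammer, map_prod, map_sub, map_one, map_mul, map_pow]

/-- The coefficient `(a; q)_k / (q; q)_k` of the `q`-binomial series. It is meant for nilpotent
`q`, for which the denominator is a unit. -/
noncomputable def qBinomialCoeff (a q : R) (k : ℕ) : R :=
  qPochhammer a q k * (qPochhammer q q k)⁻¹ʳ

/-- The quotient `(a z; q)_∞ / (z; q)_∞`, truncated to `M` factors. It is meant for `q ^ M = 0`,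
where the truncation loses nothing, and for nilpotent `z`, where the denominator is a unit. -/
noncomputable def qBinomialProd (M : ℕ) (a q z : R) : R :=
  qPochhammer (a * z) q M * (qPochhammer z q M)⁻¹ʳ

lemma qBinomialCoeff_zero (a q : R) : qBinomialCoeff a q 0 = 1 := by
  simp [qBinomialCoeff, qPochhammer]

lemma one_sub_pow_mul_qBinomialCoeff_succ {q : R} (hq : IsNilpotent q) (a : R) (k : ℕ) :
    (1 - q ^ (k + 1)) * qBinomialCoeff a q (k + 1) = (1 - a * q ^ k) * qBinomialCoeff a q k := by
  have h : IsUnit (1 - q ^ (k + 1)) := by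
    simpa only [pow_succ'] using isUnit_one_sub_mul hq (q ^ k)
  rw [qBinomialCoeff, qBinomialCoeff, qPochhammer_succ, qPochhammer_succ, ← pow_succ',
    Ring.inverse_mul (.inr h)]
  linear_combination (1 - a * q ^ k) * qPochhammer a q k * (qPochhammer q q k)⁻¹ʳ *
    Ring.mul_inverse_cancel _ h

lemma qBinomialCoeff_succ_eq_sub {q : R} (hq : IsNilpotent q) (a : R) (k : ℕ) :
    qBinomialCoeff a q (k + 1) =
      qBinomialCoeff (a * q) q (k + 1) - a * qBinomialCoeff (a * q) q k := by
  have h : IsUnit (1 - q ^ (k + 1)) := by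
    simpa only [pow_succ'] using isUnit_one_sub_mul hq (q ^ k)
  simp only [qBinomialCoeff]
  rw [qPochhammer_succ' a, qPochhammer_succ (a * q), qPochhammer_succ q, ← pow_succ',
    Ring.inverse_mul (.inr h)]
  linear_combination -a * qPochhammer (a * q) q k * (qPochhammer q q k)⁻¹ʳ *
    Ring.mul_inverse_cancel _ h

lemma qBinomialCoeff_one_succ (q : R) (k : ℕ) : qBinomialCoeff 1 q (k + 1) = 0 := by
  simp [qBinomialCoeff, qPochhammer_succ']

lemma one_sub_mul_qBinomialProd {q z : R} (hq : q ^ M = 0) (hz : IsNilpotent z) (a : R) :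
    (1 - z) * qBinomialProd M a q z = (1 - a * z) * qBinomialProd M a q (z * q) := by
  have h : IsUnit (1 - z) := hz.isUnit_one_sub
  rw [qBinomialProd, qBinomialProd, qPochhammer_eq_one_sub_mul hq (a * z),
    qPochhammer_eq_one_sub_mul hq z, Ring.inverse_mul (.inl h), mul_assoc a z q]
  linear_combination (1 - a * z) * qPochhammer (a * (z * q)) q M *
    (qPochhammer (z * q) q M)⁻¹ʳ * Ring.mul_inverse_cancel _ h

lemma qBinomialProd_eq_one_sub_mul {q : R} (hq : q ^ M = 0) (a z : R) :
    qBinomialProd M a q z = (1 - a * z) * qBinomialProd M (a * q) q z := by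
  rw [qBinomialProd, qPochhammer_eq_one_sub_mul hq, qBinomialProd, mul_right_comm a z q, mul_assoc]

lemma qBinomialProd_one {z : R} (hz : IsNilpotent z) (q : R) : qBinomialProd M 1 q z = 1 := by
  rw [qBinomialProd, one_mul, Ring.mul_inverse_cancel _ (isUnit_qPochhammer hz q M)]

/-- The double sum `∑ₖ (a; q)_k / (q; q)_k * x ^ k * (a y q ^ k; q)_∞ / (y q ^ k; q)_∞`, truncated
to `k < M` and meant for `q ^ M = x ^ M = 0`. -/
noncomputable def qKummerSum (M : ℕ) (a q x y : R) : R :=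
  ∑ k ∈ range M, qBinomialCoeff a q k * x ^ k * qBinomialProd M a q (y * q ^ k)

lemma sum_range_eq_sum_range_succ {f : ℕ → R} (h₀ : f 0 = 0) (hM : f M = 0) :
    ∑ k ∈ range M, f k = ∑ k ∈ range M, f (k + 1) := by
  simpa only [h₀, hM, add_zero] using (sum_range_succ f M).symm.trans (sum_range_succ' f M)

variable {q x y : R}

lemma qKummerSum_sub_left (hq : q ^ M = 0) (hx : x ^ M = 0) (a y : R) :
    qKummerSum M a q x y - qKummerSum M a q (x * q) y =
      x * qKummerSum M a q x (y * q) - a * x * qKummerSum M a q (x * q) (y * q) := by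
  simp only [qKummerSum, mul_sum, ← sum_sub_distrib]
  rw [sum_range_eq_sum_range_succ (by simp) (by simp [mul_pow, hx])]
  refine sum_congr rfl fun k _ => ?_
  rw [mul_assoc y q, ← pow_succ']
  linear_combination x ^ (k + 1) * qBinomialProd M a q (y * q ^ (k + 1)) *
    one_sub_pow_mul_qBinomialCoeff_succ ⟨M, hq⟩ a k

lemma qKummerSum_sub_right (hq : q ^ M = 0) (hy : IsNilpotent y) (a x : R) :
    qKummerSum M a q x y - qKummerSum M a q x (y * q) =
      y * qKummerSum M a q (x * q) y - a * y * qKummerSum M a q (x * q) (y * q) := by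
  simp only [qKummerSum, mul_sum, ← sum_sub_distrib]
  refine sum_congr rfl fun k _ => ?_
  have hyq : IsNilpotent (y * q ^ k) := (Commute.all _ _).isNilpotent_mul_right hy
  rw [mul_right_comm y q]
  linear_combination qBinomialCoeff a q k * x ^ k * one_sub_mul_qBinomialProd hq hyq a

lemma qKummerSum_eq_shift (hq : q ^ M = 0) (hx : x ^ M = 0) (a y : R) :
    qKummerSum M a q x y =
      qKummerSum M (a * q) q x y - a * y * qKummerSum M (a * q) q (x * q) y -
        a * x * qKummerSum M (a * q) q x (y * q) +
        a ^ 2 * q * x * y * qKummerSum M (a * q) q (x * q) (y * q) := by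
  rw [← sub_eq_zero]
  have h : ∑ k ∈ range M, (qBinomialCoeff a q k - qBinomialCoeff (a * q) q k) * x ^ k *
        ((1 - a * (y * q ^ k)) * qBinomialProd M (a * q) q (y * q ^ k)) =
      ∑ k ∈ range M, -(a * qBinomialCoeff (a * q) q k) * x ^ (k + 1) *
        ((1 - a * (y * q ^ (k + 1))) * qBinomialProd M (a * q) q (y * q ^ (k + 1))) := by
    rw [sum_range_eq_sum_range_succ (by simp [qBinomialCoeff_zero]) (by simp [hx])]
    refine sum_congr rfl fun k _ => ?_
    rw [qBinomialCoeff_succ_eq_sub ⟨M, hq⟩, sub_sub_cancel_left]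
  rw [← sub_eq_zero, ← sum_sub_distrib] at h
  simp only [qKummerSum, mul_sum, ← sum_sub_distrib, ← sum_add_distrib]
  rw [← h]
  refine sum_congr rfl fun k _ => ?_
  rw [qBinomialProd_eq_one_sub_mul hq a, mul_assoc y q, ← pow_succ']
  ring

lemma qKummerSum_eq_mul_sub_mul (hq : q ^ M = 0) (hx : x ^ M = 0) (a y : R) :
    qKummerSum M a q x y = (1 - a * y) * qKummerSum M (a * q) q x y -
      a * x * (1 - y) * qKummerSum M (a * q) q x (y * q) := by
  linear_combination qKummerSum_eq_shift hq hx a y +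
    a * y * qKummerSum_sub_left hq hx (a * q) y

lemma qKummerSum_mul_eq_mul_add_mul (hq : q ^ M = 0) (hx : x ^ M = 0) (hy : IsNilpotent y)
    (a : R) :
    qKummerSum M a q x (y * q) = (1 - y) * qKummerSum M (a * q) q x y +
      x * (y - a) * qKummerSum M (a * q) q x (y * q) := by
  have hyq : IsNilpotent (y * q) := (Commute.all _ _).isNilpotent_mul_right hy
  linear_combination qKummerSum_eq_shift hq hx a (y * q) +
    a * x * qKummerSum_sub_right hq hyq (a * q) x - qKummerSum_sub_right hq hy (a * q) x +
    y * qKummerSum_sub_left hq hx (a * q) y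

lemma qKummerSum_neg_eq_sq_mul (hx : x ^ M = 0) (a : R) :
    qKummerSum M a (x ^ 2) x (-x) =
      (1 - a * x ^ 2) ^ 2 * qKummerSum M (a * (x ^ 2) ^ 2) (x ^ 2) x (-x) := by
  have hq : (x ^ 2) ^ M = 0 := by rw [pow_right_comm, hx, zero_pow two_ne_zero]
  have hy : IsNilpotent (-x) := IsNilpotent.neg ⟨M, hx⟩
  rw [pow_two (x ^ 2), ← mul_assoc]
  -- After two shifts of `a`, the terms with `-x * x ^ 2` cancel because the base is `x ^ 2`.
  linear_combination qKummerSum_eq_mul_sub_mul hq hx a (-x) +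
    (1 + a * x) * qKummerSum_eq_mul_sub_mul hq hx (a * x ^ 2) (-x) -
    a * x * (1 + x) * qKummerSum_mul_eq_mul_add_mul hq hx hy (a * x ^ 2)

lemma qKummerSum_neg_eq_qPochhammer_sq_mul (hx : x ^ M = 0) (a : R) (n : ℕ) :
    qKummerSum M a (x ^ 2) x (-x) = qPochhammer (a * x ^ 2) ((x ^ 2) ^ 2) n ^ 2 *
      qKummerSum M (a * ((x ^ 2) ^ 2) ^ n) (x ^ 2) x (-x) := by
  induction n with
  | zero => simp [qPochhammer]
  | succ n ih =>
    rw [ih, qKummerSum_neg_eq_sq_mul hx (a * _), qPochhammer_succ, pow_succ _ n, ← mul_assoc a]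
    ring

lemma qKummerSum_one_neg (hx : x ^ M = 0) : qKummerSum M 1 (x ^ 2) x (-x) = 1 := by
  cases M with
  | zero => exact eq_of_zero_eq_one (by simpa using hx.symm) _ _
  | succ m =>
    rw [qKummerSum, sum_range_succ', sum_eq_zero fun k _ => by simp [qBinomialCoeff_one_succ],
      pow_zero, pow_zero, mul_one, mul_one, qBinomialCoeff_zero,
      qBinomialProd_one (IsNilpotent.neg ⟨_, hx⟩), zero_add, one_mul]

theorem qKummerSum_neg_mul_qPochhammer_sq (hx : x ^ M = 0) (a : R) :
    qKummerSum M a (x ^ 2) x (-x) * qPochhammer (x ^ 2) ((x ^ 2) ^ 2) M ^ 2 =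
      qPochhammer (a * x ^ 2) ((x ^ 2) ^ 2) M ^ 2 := by
  have key (b : R) : qKummerSum M b (x ^ 2) x (-x) =
      qPochhammer (b * x ^ 2) ((x ^ 2) ^ 2) M ^ 2 * qKummerSum M 0 (x ^ 2) x (-x) := by
    have hq : ((x ^ 2) ^ 2) ^ M = 0 := by
      rw [pow_right_comm, pow_right_comm x, hx, zero_pow two_ne_zero, zero_pow two_ne_zero]
    simpa only [hq, mul_zero] using qKummerSum_neg_eq_qPochhammer_sq_mul hx b M
  have h₁ := (key 1).symm.trans (qKummerSum_one_neg hx)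
  rw [one_mul] at h₁
  linear_combination qPochhammer (x ^ 2) ((x ^ 2) ^ 2) M ^ 2 * key a +
    qPochhammer (a * x ^ 2) ((x ^ 2) ^ 2) M ^ 2 * h₁

end QSeries

section PartSeries

open PowerSeries

variable {R : Type*}

/-- The series `∑ₘ g m * X ^ (i * m)`: the factor contributed by the parts of size `i` to a
generating function of partitions in which multiplicity `m` of `i` has weight `g m`. It is meant for
`i ≠ 0`. -/
noncomputable def partSeries [Semiring R] (g : ℕ → R) (i : ℕ) : R⟦X⟧ :=
  PowerSeries.mk fun m => if i ∣ m then g (m / i) else 0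

/-- The partition consisting of `l i / i` copies of each `i ∈ s`. -/
def partitionOfFinsuppAntidiag {s : Finset ℕ} (hs : 0 ∉ s) {n : ℕ} {l : ℕ →₀ ℕ}
    (hl : l ∈ s.finsuppAntidiag n) (hdvd : ∀ i ∈ s, i ∣ l i) : n.Partition where
  parts := ∑ i ∈ s, Multiset.replicate (l i / i) i
  parts_pos {j} hj := by
    obtain ⟨i, hi, hj⟩ := Multiset.mem_sum.1 hj
    rw [Multiset.eq_of_mem_replicate hj]
    exact Nat.pos_of_ne_zero (ne_of_mem_of_not_mem hi hs)
  parts_sum := by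
    rw [← Multiset.coe_sumAddMonoidHom, map_sum]
    exact (sum_congr rfl fun i hi => by simp [Nat.div_mul_cancel (hdvd i hi)]).trans
      (mem_finsuppAntidiag.1 hl).1

lemma toFinsuppAntidiag_partitionOfFinsuppAntidiag {s : Finset ℕ} (hs : 0 ∉ s) {n : ℕ}
    {l : ℕ →₀ ℕ} (hl : l ∈ s.finsuppAntidiag n) (hdvd : ∀ i ∈ s, i ∣ l i) :
    (partitionOfFinsuppAntidiag hs hl hdvd).toFinsuppAntidiag = l := by
  ext j
  simp only [partitionOfFinsuppAntidiag, Nat.Partition.toFinsuppAntidiag, Finsupp.coe_mk,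
    Multiset.count_sum', Multiset.count_replicate, sum_ite_eq']
  split_ifs with hj
  · exact Nat.div_mul_cancel (hdvd j hj)
  · rw [zero_mul, Finsupp.notMem_support_iff.1 fun h => hj ((mem_finsuppAntidiag.1 hl).2 h)]

theorem coeff_prod_partSeries [CommSemiring R] (f : ℕ → ℕ → R) {s : Finset ℕ} (hs : 0 ∉ s)
    (n : ℕ) : coeff n (∏ i ∈ s, partSeries (f i) i) =
      ∑ p : n.Partition with p.parts.toFinset ⊆ s, ∏ i ∈ s, f i (p.parts.count i) := by
  rw [coeff_prod]
  refine (sum_of_injOn Nat.Partition.toFinsuppAntidiag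
    (Nat.Partition.toFinsuppAntidiag_injective n).injOn ?_ ?_ ?_).symm
  · intro p hp
    exact mem_coe.2 <| mem_finsuppAntidiag'.2
      ⟨(mem_finsuppAntidiag'.1 p.toFinsuppAntidiag_mem_finsuppAntidiag).1, (mem_filter.1 hp).2⟩
  · intro l hl hl'
    obtain ⟨i, hi, hil⟩ : ∃ i ∈ s, ¬ i ∣ l i := by
      by_contra! hdvd
      have hp := toFinsuppAntidiag_partitionOfFinsuppAntidiag hs hl hdvd
      refine hl' ⟨_, mem_coe.2 (mem_filter.2 ⟨mem_univ _, ?_⟩), hp⟩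
      exact (congrArg Finsupp.support hp).trans_subset (mem_finsuppAntidiag.1 hl).2
    exact prod_eq_zero hi (by rw [partSeries, coeff_mk, if_neg hil])
  · intro p _
    refine prod_congr rfl fun i hi => ?_
    have hi₀ : 0 < i := Nat.pos_of_ne_zero (ne_of_mem_of_not_mem hi hs)
    simp [partSeries, Nat.Partition.toFinsuppAntidiag, hi₀]

lemma map_partSeries {S : Type*} [Semiring R] [Semiring S] (φ : R →+* S) (g : ℕ → R) (i : ℕ) :
    PowerSeries.map φ (partSeries g i) = partSeries (φ ∘ g) i := by
  ext m
  simp only [partSeries, coeff_map, coeff_mk, apply_ite φ, map_zero, Function.comp_apply]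

open scoped Classical in
/-- The number of ways to overline parts of one size that occurs `m` times, restricted to those
multiplicities `m` that satisfy `P`. -/
noncomputable def overlineWeight (R : Type*) [NatCast R] (P : ℕ → Prop) (m : ℕ) : R :=
  ((if P m then if m = 0 then 1 else 2 else 0 : ℕ) : R)

lemma comp_overlineWeight {S : Type*} [Semiring R] [Semiring S] (φ : R →+* S) (P : ℕ → Prop) :
    φ ∘ overlineWeight R P = overlineWeight S P :=
  funext fun _ => map_natCast φ _

variable [CommRing R]

lemma partSeries_eq_expand (g : ℕ → R) {i : ℕ} (hi : i ≠ 0) :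
    partSeries g i = expand i hi (PowerSeries.mk g) := by
  ext m
  rw [partSeries, coeff_mk, coeff_expand, coeff_mk]

lemma partSeries_mul_eq_expand (g : ℕ → R) {i j : ℕ} (hi : i ≠ 0) (hj : j ≠ 0) :
    partSeries g (i * j) = expand i hi (partSeries g j) := by
  rw [partSeries_eq_expand g (mul_ne_zero hi hj), partSeries_eq_expand g hj, expand_mul]

lemma coeff_prod_partSeries_mul_pow_eq_zero (g : ℕ → R) {n d : ℕ} (hd : d ≠ 0) (hn : ¬ d ∣ n)
    {ι : Type*} {s : Finset ι} {f : ι → ℕ} (hf : ∀ j ∈ s, f j ≠ 0) (m : ℕ) :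
    coeff n ((∏ j ∈ s, partSeries g (d * f j)) ^ m) = 0 := by
  rw [prod_congr rfl fun j hj => partSeries_mul_eq_expand g hd (hf j hj), ← map_prod, ← map_pow]
  exact coeff_expand_of_not_dvd d hd _ hn

lemma one_sub_X_mul_mk_overlineWeight :
    (1 - X : R⟦X⟧) * PowerSeries.mk (overlineWeight R fun _ => True) = 1 + X := by
  ext (_ | _ | m) <;> norm_num [sub_mul, coeff_succ_X_mul, overlineWeight, coeff_one, coeff_X]

lemma one_sub_X_pow_mul_partSeries {d : ℕ} (hd : d ≠ 0) :
    (1 - X ^ d : R⟦X⟧) * partSeries (overlineWeight R fun _ => True) d = 1 + X ^ d := by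
  simpa [partSeries_eq_expand _ hd] using
    congrArg (expand d hd) (one_sub_X_mul_mk_overlineWeight (R := R))

lemma partSeries_overlineWeight_even {i : ℕ} (hi : i ≠ 0) :
    partSeries (overlineWeight R Even) i = partSeries (overlineWeight R fun _ => True) (i * 2) := by
  rw [partSeries_mul_eq_expand _ hi two_ne_zero, partSeries_eq_expand _ hi]
  congr 1
  ext m
  simp only [partSeries, overlineWeight, coeff_mk, even_iff_two_dvd, if_true]
  split_ifs <;> first | omega | rfl | simp

lemma one_sub_X_pow_mul_partSeries_even {i : ℕ} (hi : i ≠ 0) :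
    (1 - X ^ (i * 2) : R⟦X⟧) * partSeries (overlineWeight R Even) i = 1 + X ^ (i * 2) := by
  rw [partSeries_overlineWeight_even hi, one_sub_X_pow_mul_partSeries (mul_ne_zero hi two_ne_zero)]

lemma one_sub_X_pow_mul_partSeries_odd {i : ℕ} (hi : i ≠ 0) :
    (1 - X ^ (i * 2) : R⟦X⟧) * partSeries (overlineWeight R Odd) i = 2 * X ^ i := by
  have h : partSeries (overlineWeight R Even) i + partSeries (overlineWeight R Odd) i =
      partSeries (overlineWeight R fun _ => True) i := by
    ext m
    rcases (m / i).even_or_odd with h | h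
    · simp [partSeries, overlineWeight, h, Nat.not_odd_iff_even.2 h]
    · simp [partSeries, overlineWeight, h, Nat.not_even_iff_odd.2 h]
  rw [eq_sub_of_add_eq' h, pow_mul]
  have heven := one_sub_X_pow_mul_partSeries_even (R := R) hi
  rw [pow_mul] at heven
  linear_combination (1 + X ^ i) * one_sub_X_pow_mul_partSeries (R := R) hi - heven

lemma prod_partSeries_mul_qPochhammer {d : ℕ} (hd : d ≠ 0) (e m : ℕ) :
    (∏ j ∈ range m, partSeries (overlineWeight R fun _ => True) (d + e * j)) *
      qPochhammer (X ^ d) (X ^ e) m = qPochhammer (-X ^ d) (X ^ e) m := by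
  rw [qPochhammer, qPochhammer, ← prod_mul_distrib]
  refine prod_congr rfl fun j _ => ?_
  rw [mul_comm, ← pow_mul, ← pow_add, one_sub_X_pow_mul_partSeries (by omega)]
  ring

end PartSeries

section Counting

lemma largestEvenPart_le_iff {s : Multiset ℕ} {m : ℕ} :
    largestEvenPart s ≤ m ↔ ∀ x ∈ s, Even x → x ≤ m := by
  simp only [largestEvenPart, Multiset.sup_le, Multiset.mem_filter, Nat.even_iff, and_imp]

lemma largestEvenPart_mem {s : Multiset ℕ} (h : largestEvenPart s ≠ 0) :
    largestEvenPart s ∈ s ∧ Even (largestEvenPart s) := by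
  contrapose! h
  have hlt : ∀ x ∈ s, Even x → x ≤ largestEvenPart s - 1 := fun x hx hxe =>
    Nat.le_sub_one_of_lt <| lt_of_le_of_ne (largestEvenPart_le_iff.1 le_rfl x hx hxe) <| by
      rintro rfl
      exact h hx hxe
  have := largestEvenPart_le_iff.2 hlt
  omega

lemma even_largestEvenPart (s : Multiset ℕ) : Even (largestEvenPart s) := by
  by_cases h : largestEvenPart s = 0
  · simp [h]
  · exact (largestEvenPart_mem h).2

lemma largestEvenPart_ne_zero_iff {s : Multiset ℕ} (hs : ∀ x ∈ s, 0 < x) :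
    largestEvenPart s ≠ 0 ↔ ∃ x ∈ s, Even x := by
  refine ⟨fun h => ⟨_, largestEvenPart_mem h⟩, fun ⟨x, hx, hxe⟩ => ?_⟩
  exact ((hs x hx).trans_le (largestEvenPart_le_iff.1 le_rfl x hx hxe)).ne'

/-- The partitions underlying the overpartitions counted by `D0` and `D2`: even parts lie below odd
parts, and the largest even part, if any, is the only part size of odd multiplicity. -/
def IsEvenOdd (s : Multiset ℕ) : Prop :=
  (∀ x ∈ s, ∀ y ∈ s, Even x → Odd y → x < y) ∧
    (∀ x ∈ s, x ≠ largestEvenPart s → Even (s.count x)) ∧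
    (largestEvenPart s = 0 ∨ Odd (s.count (largestEvenPart s)))

lemma ncard_overpartitions (P : Multiset ℕ → Prop) [DecidablePred P] (n : ℕ) :
    {op : Multiset ℕ × Finset ℕ | (∀ x ∈ op.1, 0 < x) ∧ op.1.sum = n ∧ op.2 ⊆ op.1.toFinset ∧
      P op.1}.ncard = ∑ p : n.Partition with P p.parts, 2 ^ #p.parts.toFinset := by
  let T : Finset (Σ _ : n.Partition, Finset ℕ) :=
    (univ.filter fun p => P p.parts).sigma fun p => p.parts.toFinset.powerset
  let φ : (Σ _ : n.Partition, Finset ℕ) → Multiset ℕ × Finset ℕ := fun t => (t.1.parts, t.2)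
  have hφ : φ.Injective := by
    rintro ⟨p, S⟩ ⟨q, S'⟩ h
    obtain ⟨hpq, rfl⟩ := Prod.mk.inj h
    obtain rfl := Nat.Partition.ext hpq
    rfl
  have hT : {op : Multiset ℕ × Finset ℕ | (∀ x ∈ op.1, 0 < x) ∧ op.1.sum = n ∧
      op.2 ⊆ op.1.toFinset ∧ P op.1} = φ '' T := by
    ext ⟨s, S⟩
    simp only [Set.mem_ofPred_eq, Set.mem_image, mem_coe, T, φ, mem_sigma, mem_filter, mem_univ,
      true_and, mem_powerset, Prod.mk.injEq, Sigma.exists]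
    constructor
    · rintro ⟨hpos, hsum, hS, hP⟩
      exact ⟨⟨s, hpos _, hsum⟩, S, ⟨hP, hS⟩, rfl, rfl⟩
    · rintro ⟨p, S, ⟨hP, hS⟩, rfl, rfl⟩
      exact ⟨fun _ => p.parts_pos, p.parts_sum, hS, hP⟩
  rw [hT, Set.ncard_image_of_injective _ hφ, Set.ncard_coe_finset, card_sigma]
  simp only [card_powerset]

open scoped Classical in
lemma D0_eq_sum (n : ℕ) :
    D0 n = ∑ p : n.Partition with IsEvenOdd p.parts ∧ largestEvenPart p.parts % 4 = 0,
      2 ^ #p.parts.toFinset := by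
  rw [← ncard_overpartitions (fun s => IsEvenOdd s ∧ largestEvenPart s % 4 = 0), D0]
  congr 1
  ext ⟨s, S⟩
  refine and_congr_right fun hs => ?_
  rw [← largestEvenPart_ne_zero_iff hs, not_not, IsEvenOdd]
  grind

open scoped Classical in
lemma D2_eq_sum (n : ℕ) :
    D2 n = ∑ p : n.Partition with IsEvenOdd p.parts ∧ largestEvenPart p.parts % 4 = 2,
      2 ^ #p.parts.toFinset := by
  rw [← ncard_overpartitions (fun s => IsEvenOdd s ∧ largestEvenPart s % 4 = 2), D2]
  congr 1
  ext ⟨s, S⟩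
  refine and_congr_right fun hs => ?_
  rw [← largestEvenPart_ne_zero_iff hs, IsEvenOdd]
  grind

open scoped Classical in
lemma D0_sub_D2_eq_sum {n M : ℕ} (hM : n < M) : (D0 n - D2 n : ℤ) = ∑ k ∈ range M,
    (-1) ^ k * ∑ p : n.Partition with IsEvenOdd p.parts ∧ largestEvenPart p.parts = 2 * k,
      2 ^ #p.parts.toFinset := by
  have hk (p : n.Partition) : ∃ k ∈ range M, largestEvenPart p.parts = 2 * k := by
    obtain ⟨k, hk⟩ := (even_largestEvenPart p.parts).exists_two_nsmul
    have hn : largestEvenPart p.parts ≤ n :=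
      largestEvenPart_le_iff.2 fun x hx _ => p.le_of_mem_parts hx
    exact ⟨k, by grind, hk⟩
  simp only [D0_eq_sum, D2_eq_sum, Nat.cast_sum, sum_filter, mul_sum]
  rw [sum_comm, ← sum_sub_distrib]
  refine sum_congr rfl fun p _ => ?_
  obtain ⟨k, hkM, hk⟩ := hk p
  rw [sum_eq_single_of_mem k hkM fun j _ hj => by grind, hk]
  rcases k.even_or_odd with hke | hko
  · rw [hke.neg_one_pow]
    grind
  · rw [hko.neg_one_pow]
    grind

end Counting

section EvenOddSeries

open PowerSeries

/-- The part sizes available to a partition whose largest even part is `2 * k`, namely the even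
numbers up to `2 * k` and the odd numbers above it, the latter truncated to `M` of them. -/
def evenOddSizes (M k : ℕ) : Finset ℕ :=
  (range k).image (fun j => (j + 1) * 2) ∪ (range M).image (fun j => 2 * k + 1 + 2 * j)

lemma mem_evenOddSizes {M k i : ℕ} : i ∈ evenOddSizes M k ↔
    Even i ∧ 0 < i ∧ i ≤ 2 * k ∨ Odd i ∧ 2 * k < i ∧ i < 2 * (k + M) := by
  simp only [evenOddSizes, mem_union, mem_image, mem_range]
  constructor
  · rintro (⟨j, hj, rfl⟩ | ⟨j, hj, rfl⟩) <;> grind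
  · rintro (⟨⟨j, rfl⟩, hpos, hle⟩ | ⟨⟨j, rfl⟩, hlt, hM⟩)
    · exact .inl ⟨j - 1, by omega, by omega⟩
    · exact .inr ⟨j - k, by omega, by omega⟩

lemma isEvenOdd_and_largestEvenPart_eq_iff {n M k : ℕ} (hM : n < M) (p : n.Partition) :
    IsEvenOdd p.parts ∧ largestEvenPart p.parts = 2 * k ↔ p.parts.toFinset ⊆ evenOddSizes M k ∧
      ∀ i ∈ evenOddSizes M k, (Odd (p.parts.count i) ↔ i = 2 * k) := by
  have hle : ∀ x ∈ p.parts, x ≤ n := fun x => p.le_of_mem_parts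
  have hpos : ∀ x ∈ p.parts, 0 < x := fun x => p.parts_pos
  simp only [subset_iff, Multiset.mem_toFinset]
  constructor
  · rintro ⟨⟨hsep, heven, hodd⟩, hk⟩
    have hmem := largestEvenPart_mem (s := p.parts)
    have hmax := largestEvenPart_le_iff.1 hk.le
    refine ⟨fun x hx => mem_evenOddSizes.2 ?_, fun i hi => ?_⟩
    · grind
    · have := mem_evenOddSizes.1 hi
      have := Multiset.count_eq_zero_of_notMem (s := p.parts) (a := i)
      grind
  · rintro ⟨hsub, hcount⟩
    simp only [mem_evenOddSizes] at hsub hcount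
    have hk : largestEvenPart p.parts = 2 * k := by
      refine le_antisymm (largestEvenPart_le_iff.2 fun x hx hxe => by grind) ?_
      rcases k.eq_zero_or_pos with rfl | hk
      · exact Nat.zero_le _
      · have hodd : Odd (p.parts.count (2 * k)) := (hcount _ (.inl (by grind))).2 rfl
        exact largestEvenPart_le_iff.1 le_rfl _ (Multiset.count_pos.1 hodd.pos) (even_two_mul k)
    refine ⟨⟨fun x hx y hy hxe hyo => by grind, fun x hx hxk => ?_, ?_⟩, hk⟩
    · exact Nat.not_odd_iff_even.1 fun h => hxk (((hcount x (hsub hx)).1 h).trans hk.symm)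
    · rw [hk]
      grind

lemma prod_overlineWeight_count {R : Type*} [CommSemiring R] (P : ℕ → ℕ → Prop) {m : Multiset ℕ}
    {s : Finset ℕ} [Decidable (∀ i ∈ s, P i (m.count i))] (hs : m.toFinset ⊆ s) :
    ∏ i ∈ s, overlineWeight R (P i) (m.count i) =
      if ∀ i ∈ s, P i (m.count i) then 2 ^ #m.toFinset else 0 := by
  have hcard : ∏ i ∈ s, (if m.count i = 0 then 1 else 2 : ℕ) = 2 ^ #m.toFinset := by
    rw [← prod_subset hs fun i _ hi => if_pos (by simpa using hi), prod_congr rfl fun i hi =>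
      if_neg (Multiset.count_ne_zero.2 (Multiset.mem_toFinset.1 hi)), prod_const]
  simp only [overlineWeight, ← Nat.cast_prod, prod_ite_zero, hcard]
  split_ifs <;> simp

/-- The weighted generating function of the overpartitions whose even parts lie below their odd
parts and whose largest even part is `2 * k` (no even part if `k = 0`), that part size being the
only one of odd multiplicity. Coefficients from `X ^ M` on are affected by the truncation. -/
noncomputable def evenOddSeries (M k : ℕ) : ℤ⟦X⟧ :=
  ∏ i ∈ evenOddSizes M k, partSeries (overlineWeight ℤ fun m => (Odd m ↔ i = 2 * k)) i

open scoped Classical in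
lemma coeff_evenOddSeries {n M : ℕ} (hM : n < M) (k : ℕ) : coeff n (evenOddSeries M k) =
    ∑ p : n.Partition with IsEvenOdd p.parts ∧ largestEvenPart p.parts = 2 * k,
      2 ^ #p.parts.toFinset := by
  rw [evenOddSeries, coeff_prod_partSeries _ (by simp [mem_evenOddSizes])]
  simp only [isEvenOdd_and_largestEvenPart_eq_iff hM, ← filter_filter]
  conv_rhs => rw [sum_filter]
  exact sum_congr rfl fun p hp => prod_overlineWeight_count _ (mem_filter.1 hp).2

lemma D0_sub_D2_eq_coeff {n M : ℕ} (hM : n < M) :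
    (D0 n - D2 n : ℤ) = coeff n (∑ k ∈ range M, (-1) ^ k * evenOddSeries M k) := by
  rw [D0_sub_D2_eq_sum hM, map_sum]
  refine sum_congr rfl fun k _ => ?_
  rw [← coeff_evenOddSeries hM]
  rcases k.even_or_odd with h | h <;> simp only [h.neg_one_pow, one_mul, neg_one_mul, map_neg]

lemma evenOddSeries_eq_mul (M k : ℕ) : evenOddSeries M k =
    (∏ j ∈ range k,
      partSeries (overlineWeight ℤ fun m => (Odd m ↔ (j + 1) * 2 = 2 * k)) ((j + 1) * 2)) *
    ∏ j ∈ range M, partSeries (overlineWeight ℤ Even) (2 * k + 1 + 2 * j) := by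
  rw [evenOddSeries, evenOddSizes, prod_union, prod_image fun a _ b _ h => by grind,
    prod_image fun a _ b _ h => by grind]
  · congr 1
    refine prod_congr rfl fun j _ => ?_
    have hne : 2 * k + 1 + 2 * j ≠ 2 * k := by omega
    simp only [hne, iff_false, Nat.not_odd_iff_even]
  · simp only [disjoint_left, mem_image]
    grind

lemma prod_even_mul_qPochhammer (k : ℕ) :
    (∏ j ∈ range k,
      partSeries (overlineWeight ℤ fun m => (Odd m ↔ (j + 1) * 2 = 2 * k)) ((j + 1) * 2)) *
      qPochhammer (X ^ 4) (X ^ 4) k = qPochhammer (-1) (X ^ 4) k * (X ^ 2) ^ k := by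
  cases k with
  | zero => simp [qPochhammer]
  | succ k =>
    have hlt : ∏ j ∈ range k, partSeries
        (overlineWeight ℤ fun m => (Odd m ↔ (j + 1) * 2 = 2 * (k + 1))) ((j + 1) * 2) =
        ∏ j ∈ range k, partSeries (overlineWeight ℤ fun _ => True) (4 + 4 * j) := by
      refine prod_congr rfl fun j hj => ?_
      have hne : (j + 1) * 2 ≠ 2 * (k + 1) := by grind
      simp only [hne, iff_false, Nat.not_odd_iff_even]
      rw [partSeries_overlineWeight_even (by omega)]
      congr 1
      ring
    have hlast := one_sub_X_pow_mul_partSeries_odd (R := ℤ) (i := (k + 1) * 2) (by omega)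
    rw [prod_range_succ, hlt]
    simp only [mul_comm (k + 1) 2, iff_true] at hlast ⊢
    rw [qPochhammer_succ, qPochhammer_succ', neg_one_mul]
    linear_combination (1 - X ^ (2 * (k + 1) * 2)) *
      partSeries (overlineWeight ℤ Odd) (2 * (k + 1)) *
        prod_partSeries_mul_qPochhammer (R := ℤ) four_ne_zero 4 k +
      qPochhammer (-X ^ 4) (X ^ 4) k * hlast

lemma evenOddSeries_mul_qPochhammer (M k : ℕ) :
    evenOddSeries M k *
        (qPochhammer (X ^ 4) (X ^ 4) k * qPochhammer (X ^ 2 * (X ^ 4) ^ k) (X ^ 4) M) =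
      qPochhammer (-1) (X ^ 4) k * (X ^ 2) ^ k *
        qPochhammer (-1 * (X ^ 2 * (X ^ 4) ^ k)) (X ^ 4) M := by
  have hodd : (∏ j ∈ range M, partSeries (overlineWeight ℤ Even) (2 * k + 1 + 2 * j)) *
      qPochhammer (X ^ 2 * (X ^ 4) ^ k) (X ^ 4) M =
        qPochhammer (-1 * (X ^ 2 * (X ^ 4) ^ k)) (X ^ 4) M := by
    rw [neg_one_mul, ← pow_mul, ← pow_add, ← prod_partSeries_mul_qPochhammer (by omega) 4 M]
    congr 1
    refine prod_congr rfl fun j _ => ?_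
    rw [partSeries_overlineWeight_even (by omega)]
    congr 1
    ring
  rw [evenOddSeries_eq_mul, mul_mul_mul_comm, prod_even_mul_qPochhammer, hodd]

end EvenOddSeries

section Difference

open PowerSeries

lemma coeff_eq_of_quotient_mk_eq {R : Type*} [CommRing R] {M n : ℕ} (hn : n < M) {f g : R⟦X⟧}
    (h : Ideal.Quotient.mk (Ideal.span {X ^ M}) f = Ideal.Quotient.mk (Ideal.span {X ^ M}) g) :
    coeff n f = coeff n g := by
  rw [Ideal.Quotient.eq, Ideal.mem_span_singleton, X_pow_dvd_iff] at h
  exact sub_eq_zero.1 ((map_sub _ f g).symm.trans (h n hn))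

section Map

variable {S : Type*} [CommRing S] (φ : ℤ⟦X⟧ →+* S) {M : ℕ}

lemma map_evenOddSeries (hφ : IsNilpotent (φ X)) (k : ℕ) : φ (evenOddSeries M k) =
    qBinomialCoeff (-1) (φ X ^ 4) k * (φ X ^ 2) ^ k *
      qBinomialProd M (-1) (φ X ^ 4) (φ X ^ 2 * (φ X ^ 4) ^ k) := by
  have hk : IsUnit (qPochhammer (φ X ^ 4) (φ X ^ 4) k) :=
    isUnit_qPochhammer (hφ.pow_of_pos four_ne_zero) _ k
  have hM : IsUnit (qPochhammer (φ X ^ 2 * (φ X ^ 4) ^ k) (φ X ^ 4) M) :=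
    isUnit_qPochhammer ((Commute.all _ _).isNilpotent_mul_right (hφ.pow_of_pos two_ne_zero)) _ M
  have h := congrArg φ (evenOddSeries_mul_qPochhammer M k)
  simp only [map_mul, map_qPochhammer, map_pow, map_neg, map_one] at h
  rw [← Ring.eq_mul_inverse_iff_mul_eq _ _ _ (hk.mul hM), Ring.inverse_mul (.inl hk)] at h
  rw [h, qBinomialCoeff, qBinomialProd]
  ring

lemma map_sum_neg_one_pow_mul_evenOddSeries (hφ : φ X ^ M = 0) :
    φ (∑ k ∈ range M, (-1) ^ k * evenOddSeries M k) =
      φ ((∏ j ∈ range M, partSeries (overlineWeight ℤ fun _ => True) (4 + 8 * j)) ^ 2) := by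
  have hx : (-φ X ^ 2) ^ M = 0 := by
    rw [neg_pow, pow_right_comm, hφ, zero_pow two_ne_zero, mul_zero]
  have hunit : IsUnit (qPochhammer (φ X ^ 4) (φ X ^ 8) M ^ 2) :=
    (isUnit_qPochhammer (IsNilpotent.pow_of_pos ⟨M, hφ⟩ four_ne_zero) _ M).pow 2
  have hsum : φ (∑ k ∈ range M, (-1) ^ k * evenOddSeries M k) =
      qKummerSum M (-1) (φ X ^ 4) (-φ X ^ 2) (φ X ^ 2) := by
    simp only [map_sum, map_mul, map_pow, map_neg, map_one, map_evenOddSeries φ ⟨M, hφ⟩, qKummerSum]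
    refine sum_congr rfl fun k _ => ?_
    rw [neg_pow (φ X ^ 2)]
    ring
  have hprod := congrArg (φ · ^ 2)
    (prod_partSeries_mul_qPochhammer (R := ℤ) four_ne_zero 8 M)
  simp only [map_mul, map_qPochhammer, map_pow, map_neg, mul_pow] at hprod
  have hKummer := qKummerSum_neg_mul_qPochhammer_sq hx (-1)
  simp only [neg_sq, neg_neg, ← pow_mul, neg_one_mul, Nat.reduceMul] at hKummer
  rw [← hunit.mul_left_inj, hsum, hKummer, map_pow, hprod]

end Map

lemma D0_sub_D2_eq_coeff_sq {n M : ℕ} (hM : n < M) : (D0 n - D2 n : ℤ) = coeff n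
    ((∏ j ∈ range M, partSeries (overlineWeight ℤ fun _ => True) (4 * (2 * j + 1))) ^ 2) := by
  have hsize (j : ℕ) : 4 * (2 * j + 1) = 4 + 8 * j := by ring
  simp only [D0_sub_D2_eq_coeff hM, hsize]
  refine coeff_eq_of_quotient_mk_eq hM (map_sum_neg_one_pow_mul_evenOddSeries _ ?_)
  rw [← map_pow, Ideal.Quotient.eq_zero_iff_mem]
  exact Ideal.mem_span_singleton_self _

theorem D0_eq_D2_of_not_four_dvd {n : ℕ} (hn : ¬ 4 ∣ n) : D0 n = D2 n := by
  have h := D0_sub_D2_eq_coeff_sq n.lt_succ_self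
  rw [coeff_prod_partSeries_mul_pow_eq_zero _ four_ne_zero hn fun j _ => (2 * j).succ_ne_zero,
    sub_eq_zero] at h
  exact_mod_cast h

theorem D0_eq_D2_add_coeff {n M : ℕ} (hM : n < M) : D0 n = D2 n + coeff n
    ((∏ j ∈ range M, partSeries (overlineWeight ℕ fun _ => True) (4 * (2 * j + 1))) ^ 2) := by
  have h := D0_sub_D2_eq_coeff_sq hM
  rw [← comp_overlineWeight (Nat.castRingHom ℤ)] at h
  simp only [← map_partSeries, ← map_prod, ← map_pow, coeff_map, eq_natCast] at h
  omega

end Difference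

end EvenOddOverpartition

theorem stmt15 (n : ℕ) (hn : 0 < n) :
    (¬ (4 ∣ n) → D0 n = D2 n) ∧ (4 ∣ n → D2 n ≤ D0 n) := by
  refine ⟨EvenOddOverpartition.D0_eq_D2_of_not_four_dvd, fun _ => ?_⟩
  rw [EvenOddOverpartition.D0_eq_D2_add_coeff n.lt_succ_self]
  exact Nat.le_add_right _ _
end

section
/- For every nonnegative integer n: if n is even then ōcp^o_{1,1,2}(n) ≤ ōcp^e_{1,1,2}(n), and if n is odd then ōcp^o_{1,1,2}(n) = ōcp^e_{1,1,2}(n). -/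
/-- The set of `(1,1,2)`-overcopartitions of size `n`: triples `(γ̄, ρ, σ̄)` where
`γ̄ = (γ, S)` and `σ̄ = (σ, T)` are overpartitions (a partition together with a subset of
its part sizes which are overlined), every part of `γ` and of `σ` is odd, and `ρ` is a
partition consisting of exactly `ν(σ)` parts, each of size `2·ν(γ)`; the size is
`|γ| + |ρ| + |σ|`. -/
def overCPSet (n : ℕ) :
    Set ((Multiset ℕ × Finset ℕ) × Multiset ℕ × (Multiset ℕ × Finset ℕ)) :=
  {t | (∀ x ∈ t.1.1, Odd x) ∧ t.1.2 ⊆ t.1.1.toFinset ∧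
       (∀ x ∈ t.2.2.1, Odd x) ∧ t.2.2.2 ⊆ t.2.2.1.toFinset ∧
       t.2.1 = Multiset.replicate (Multiset.card t.2.2.1) (2 * Multiset.card t.1.1) ∧
       t.1.1.sum + t.2.1.sum + t.2.2.1.sum = n}

/-- `ōcp^o_{1,1,2}(n)`: the number of `(1,1,2)`-overcopartitions of size `n` with `ν(γ)`
odd. -/
noncomputable def overCPOdd (n : ℕ) : ℕ :=
  {t ∈ overCPSet n | Odd (Multiset.card t.1.1)}.ncard

/-- `ōcp^e_{1,1,2}(n)`: the number of `(1,1,2)`-overcopartitions of size `n` with `ν(γ)`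
even. -/
noncomputable def overCPEven (n : ℕ) : ℕ :=
  {t ∈ overCPSet n | Even (Multiset.card t.1.1)}.ncard

/-!
The generating function of `ōcp^e - ōcp^o` is `∑_{γ̄, σ̄} (-1)^ν(γ) q^(|γ| + |σ| + 2 ν(γ) ν(σ))`.
Overpartitions into `n` odd parts are counted by `(-1; q²)_n q^n / (q²; q²)_n`, so the `q`-binomial
theorem evaluates the sum over `σ̄` as `(-q^(2n+1); q²)_∞ / (q^(2n+1); q²)_∞` with `n = ν(γ)`. The
sum over `γ̄` that remains is, up to an infinite product, `₂φ₁(-1, q; -q; q², -q)`, which the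
Bailey–Daum theorem evaluates. With Euler's identity `(-q²; q²)_∞ (q²; q⁴)_∞ = 1` the result is
`((-q²; q²)_∞ (-q²; q⁴)_∞)²`, an even power series with nonnegative coefficients.
-/

open Filter Finset PowerSeries Topology
open scoped PowerSeries.WithPiTopology Ring

section Convergence

variable {R : Type*} [CommRing R] [TopologicalSpace R]

theorem summable_X_pow_mul {ι : Type*} {w : ι → ℕ} (hw : ∀ n, {i | w i ≤ n}.Finite)
    (f : ι → R⟦X⟧) : Summable fun i => X ^ w i * f i := by
  refine (WithPiTopology.summable_iff_summable_coeff R).2 fun n =>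
    summable_of_hasFiniteSupport ((hw n).subset fun i hi => ?_)
  by_contra hlt
  exact hi (by simp [coeff_X_pow_mul', show ¬w i ≤ n from hlt])

theorem summable_of_X_pow_dvd {f : ℕ → R⟦X⟧} (hf : ∀ n, X ^ n ∣ f n) : Summable f := by
  choose g hg using hf
  exact (summable_X_pow_mul (w := id) Set.finite_Iic g).congr fun n => (hg n).symm

theorem multipliable_one_sub_mul_pow {q : R⟦X⟧} (hq : X ∣ q) (a : R⟦X⟧) :
    Multipliable fun n => 1 - a * q ^ n := by
  simp only [sub_eq_add_neg]
  refine WithPiTopology.multipliable_one_add_of_tendsto_order_atTop_nhds_top R <|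
    tendsto_nhds_top_mono ENat.tendsto_natCast_nhds_top (.of_forall fun n => ?_)
  exact nat_le_order _ _ (X_pow_dvd_iff.1 ((pow_dvd_pow_of_dvd hq n).mul_left a).neg_right)

theorem tendsto_of_X_pow_dvd_sub {F : ℕ → R⟦X⟧} {L : R⟦X⟧} (h : ∀ n, X ^ n ∣ F n - L) :
    Tendsto F atTop (𝓝 L) := by
  refine (WithPiTopology.tendsto_iff_coeff_tendsto R _ _ _).2 fun d =>
    tendsto_const_nhds.congr' ?_
  filter_upwards [eventually_gt_atTop d] with n hn
  have hcoeff := X_pow_dvd_iff.1 (h n) d hn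
  rw [map_sub, sub_eq_zero] at hcoeff
  exact hcoeff.symm

theorem hasSum_zero_of_X_pow_dvd_sum_range [T2Space R] {f : ℕ → R⟦X⟧} (hf : Summable f)
    (h : ∀ n, X ^ n ∣ ∑ i ∈ range n, f i) : HasSum f 0 := by
  have hlim : Tendsto (fun n => ∑ i ∈ range n, f i) atTop (𝓝 0) :=
    tendsto_of_X_pow_dvd_sub fun n => by simpa only [sub_zero] using h n
  exact tendsto_nhds_unique hf.hasSum.tendsto_sum_nat hlim ▸ hf.hasSum

theorem X_pow_dvd_tsum [T1Space R] {ι : Type*} {f : ι → R⟦X⟧} {n : ℕ} (h : ∀ i, X ^ n ∣ f i) :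
    X ^ n ∣ ∑' i, f i := by
  have hclosed : IsClosed (Ideal.span {(X : R⟦X⟧) ^ n} : Set R⟦X⟧) := by
    have hset : (Ideal.span {(X : R⟦X⟧) ^ n} : Set R⟦X⟧) =
        ⋂ m, ⋂ (_ : m < n), coeff m ⁻¹' {0} := by
      ext f
      simp [Ideal.mem_span_singleton, X_pow_dvd_iff]
    rw [hset]
    exact isClosed_biInter fun m _ =>
      isClosed_singleton.preimage (WithPiTopology.continuous_coeff R m)
  exact Ideal.mem_span_singleton.1 (tsum_mem hclosed fun i => Ideal.mem_span_singleton.2 (h i))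

end Convergence

theorem mul_eq_mul_of_hasProd_of_tendsto {M : Type*} [CommMonoid M] [TopologicalSpace M]
    [ContinuousMul M] [T2Space M] {u v F : ℕ → M} {U V L : M} (hu : HasProd u U)
    (hv : HasProd v V) (hF : Tendsto F atTop (𝓝 L)) (h : ∀ n, u n * F n = v n * F (n + 1)) :
    U * F 0 = V * L := by
  have hprod (n : ℕ) : (∏ i ∈ range n, u i) * F 0 = (∏ i ∈ range n, v i) * F n := by
    induction n with
    | zero => simp
    | succ n ih =>
      rw [prod_range_succ, prod_range_succ, mul_assoc _ (v n), ← h n, mul_right_comm, ih,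
        mul_assoc, mul_comm (F n)]
  refine tendsto_nhds_unique (hu.tendsto_prod_nat.mul_const (F 0)) ?_
  simpa only [hprod] using hv.tendsto_prod_nat.mul hF

section QPochhammer

variable {A : Type*} [CommRing A]

/-- The `q`-Pochhammer symbol `(a; q)_n`. -/
def qPochhammer (a q : A) (n : ℕ) : A :=
  ∏ i ∈ range n, (1 - a * q ^ i)

@[simp]
theorem qPochhammer_zero (a q : A) : qPochhammer a q 0 = 1 :=
  prod_range_zero _

theorem qPochhammer_succ (a q : A) (n : ℕ) :
    qPochhammer a q (n + 1) = qPochhammer a q n * (1 - a * q ^ n) :=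
  prod_range_succ _ _

theorem qPochhammer_succ' (a q : A) (n : ℕ) :
    qPochhammer a q (n + 1) = (1 - a) * qPochhammer (a * q) q n := by
  simp [qPochhammer, prod_range_succ', pow_succ', mul_comm (1 - a), mul_assoc]

@[simp]
theorem zero_qPochhammer (q : A) (n : ℕ) : qPochhammer 0 q n = 1 := by
  simp [qPochhammer]

theorem map_qPochhammer {B : Type*} [CommRing B] (f : A →+* B) (a q : A) (n : ℕ) :
    f (qPochhammer a q n) = qPochhammer (f a) (f q) n := by
  simp [qPochhammer]

/-- The `n`-th term `(a; q)_n (b; q)_n z ^ n / ((q; q)_n (c; q)_n)` of the basic hypergeometric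
series `₂φ₁(a, b; c; q, z)`. It vanishes when the denominator is not a unit. -/
noncomputable def basicHypergeometricTerm (a b c q z : A) (n : ℕ) : A :=
  qPochhammer a q n * qPochhammer b q n * (qPochhammer q q n * qPochhammer c q n)⁻¹ʳ * z ^ n

theorem basicHypergeometricTerm_mul_pow (a b c q z w : A) (n : ℕ) :
    basicHypergeometricTerm a b c q z n * w ^ n = basicHypergeometricTerm a b c q (z * w) n := by
  rw [basicHypergeometricTerm, basicHypergeometricTerm, mul_pow, mul_assoc]

theorem map_ringInverse_of_isUnit {B : Type*} [CommRing B] (f : A →+* B) {u : A} (hu : IsUnit u) :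
    f u⁻¹ʳ = (f u)⁻¹ʳ := by
  obtain ⟨u, rfl⟩ := hu
  rw [Ring.inverse_unit]
  exact (Ring.inverse_unit (Units.map (f : A →* B) u)).symm

theorem basicHypergeometricTerm_mul_cancel {a b c q z : A} {n : ℕ}
    (h : IsUnit (qPochhammer q q n * qPochhammer c q n)) :
    basicHypergeometricTerm a b c q z n * (qPochhammer q q n * qPochhammer c q n) =
      qPochhammer a q n * qPochhammer b q n * z ^ n := by
  rw [basicHypergeometricTerm, mul_right_comm, Ring.inverse_mul_cancel_right _ _ h]

theorem map_basicHypergeometricTerm {B : Type*} [CommRing B] (f : A →+* B) {a b c q z : A} {n : ℕ}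
    (h : IsUnit (qPochhammer q q n * qPochhammer c q n)) :
    f (basicHypergeometricTerm a b c q z n) =
      basicHypergeometricTerm (f a) (f b) (f c) (f q) (f z) n := by
  simp only [basicHypergeometricTerm, map_mul, map_pow, map_ringInverse_of_isUnit f h,
    map_qPochhammer]

end QPochhammer

section PowerSeries

variable {R : Type*} [CommRing R]

theorem isUnit_one_sub_of_X_dvd {f : R⟦X⟧} (hf : X ∣ f) : IsUnit (1 - f) := by
  simp [isUnit_iff_constantCoeff, X_dvd_iff.1 hf]

theorem isUnit_qPochhammer {a : R⟦X⟧} (ha : X ∣ a) (q : R⟦X⟧) (n : ℕ) :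
    IsUnit (qPochhammer a q n) :=
  IsUnit.prod_iff.2 fun i _ => isUnit_one_sub_of_X_dvd (ha.mul_right (q ^ i))

variable {c q : R⟦X⟧}

theorem isUnit_qPochhammer_mul_qPochhammer (hc : X ∣ c) (hq : X ∣ q) (n : ℕ) :
    IsUnit (qPochhammer q q n * qPochhammer c q n) :=
  (isUnit_qPochhammer hq q n).mul (isUnit_qPochhammer hc q n)

theorem basicHypergeometricTerm_succ (a b : R⟦X⟧) (hc : X ∣ c) (hq : X ∣ q) (z : R⟦X⟧) (n : ℕ) :
    (1 - q ^ (n + 1)) * (1 - c * q ^ n) * basicHypergeometricTerm a b c q z (n + 1) =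
      (1 - a * q ^ n) * (1 - b * q ^ n) * z * basicHypergeometricTerm a b c q z n := by
  have hn := isUnit_qPochhammer_mul_qPochhammer hc hq n
  have hterm := basicHypergeometricTerm_mul_cancel (a := a) (b := b) (z := z) hn
  have hterm_succ := basicHypergeometricTerm_mul_cancel (a := a) (b := b) (z := z)
    (isUnit_qPochhammer_mul_qPochhammer hc hq (n + 1))
  simp only [qPochhammer_succ] at hterm_succ
  refine hn.mul_right_cancel ?_
  linear_combination hterm_succ - (1 - a * q ^ n) * (1 - b * q ^ n) * z * hterm

theorem X_pow_dvd_basicHypergeometricTerm (a b : R⟦X⟧) {z : R⟦X⟧} (hz : X ∣ z) (n : ℕ) :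
    X ^ n ∣ basicHypergeometricTerm a b c q z n :=
  (pow_dvd_pow_of_dvd hz n).mul_left _

theorem X_pow_dvd_basicHypergeometricTerm_sub {a a' c' z z' : R⟦X⟧} {m : ℕ} (b : R⟦X⟧)
    (hc : X ∣ c) (hc' : X ∣ c') (hq : X ∣ q) (haa' : X ^ m ∣ a - a') (hcc' : X ^ m ∣ c - c')
    (hzz' : X ^ m ∣ z - z') (n : ℕ) :
    X ^ m ∣ basicHypergeometricTerm a b c q z n - basicHypergeometricTerm a' b c' q z' n := by
  simp only [← Ideal.mem_span_singleton, ← Ideal.Quotient.eq] at haa' hcc' hzz' ⊢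
  rw [map_basicHypergeometricTerm _ (isUnit_qPochhammer_mul_qPochhammer hc hq n),
    map_basicHypergeometricTerm _ (isUnit_qPochhammer_mul_qPochhammer hc' hq n), haa', hcc', hzz']

theorem one_sub_mul_basicHypergeometricTerm_mul_left (a b c q z : R⟦X⟧) (n : ℕ) :
    (1 - a) * basicHypergeometricTerm (a * q) b c q z n =
      (1 - a * q ^ n) * basicHypergeometricTerm a b c q z n := by
  have hshift := qPochhammer_succ' a q n
  rw [qPochhammer_succ] at hshift
  simp only [basicHypergeometricTerm]
  linear_combination
    -(qPochhammer b q n * (qPochhammer q q n * qPochhammer c q n)⁻¹ʳ * z ^ n) * hshift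

theorem one_sub_mul_basicHypergeometricTerm (a b : R⟦X⟧) (hc : X ∣ c) (hq : X ∣ q) (z : R⟦X⟧)
    (n : ℕ) :
    (1 - c) * basicHypergeometricTerm a b c q z n =
      (1 - c * q ^ n) * basicHypergeometricTerm a b (c * q) q z n := by
  have hn := isUnit_qPochhammer_mul_qPochhammer hc hq n
  have hn' := isUnit_qPochhammer_mul_qPochhammer (hc.mul_right q) hq n
  have hshift := qPochhammer_succ' c q n
  rw [qPochhammer_succ] at hshift
  have hterm := basicHypergeometricTerm_mul_cancel (a := a) (b := b) (z := z) hn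
  have hterm' := basicHypergeometricTerm_mul_cancel (a := a) (b := b) (z := z) hn'
  refine (hn.mul hn').mul_right_cancel ?_
  linear_combination
    (1 - c) * (qPochhammer q q n * qPochhammer (c * q) q n) * hterm -
    (1 - c * q ^ n) * (qPochhammer q q n * qPochhammer c q n) * hterm' -
    (qPochhammer q q n * qPochhammer a q n * qPochhammer b q n * z ^ n) * hshift

-- Iterating `a ↦ a * q ^ 2` reduces the Bailey–Daum theorem to `a = 0`. The term-by-term difference
-- of the two sides of one step telescopes, as in a Wilf–Zeilberger proof.
theorem baileyDaum_summand (a b z : R⟦X⟧) (hc : X ∣ c) (hq : X ∣ q) (n : ℕ) :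
    (1 - a * c) * (1 - a * c * q) * basicHypergeometricTerm a b (a * c) q z n -
        (1 - a * c ^ 2) *
          ((1 - a * q) * basicHypergeometricTerm (a * q ^ 2) b (a * c * q ^ 2) q z n) =
      (1 - a * c * q ^ n) * (1 - a * c * q ^ (n + 1)) *
          basicHypergeometricTerm a b (a * c * q ^ 2) q z n -
        (1 - a * c ^ 2) * (1 - a * q ^ (n + 1)) *
          basicHypergeometricTerm (a * q) b (a * c * q ^ 2) q z n := by
  have hc₁ := one_sub_mul_basicHypergeometricTerm a b (hc.mul_left a) hq z n
  have hc₂ := one_sub_mul_basicHypergeometricTerm a b ((hc.mul_left a).mul_right q) hq z n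
  have ha := one_sub_mul_basicHypergeometricTerm_mul_left (a * q) b (a * c * q ^ 2) q z n
  rw [mul_assoc (a * c) q q, ← sq] at hc₂
  rw [mul_assoc a q q, ← sq] at ha
  linear_combination (1 - a * c * q) * hc₁ + (1 - a * c * q ^ n) * hc₂ - (1 - a * c ^ 2) * ha

theorem baileyDaum_sum_range {b : R⟦X⟧} (hbc : b * c = q) (hc : X ∣ c) (a : R⟦X⟧) (n : ℕ) :
    ∑ i ∈ range (n + 1),
        ((1 - a * c) * (1 - a * c * q) * basicHypergeometricTerm a b (a * c) q (-c) i -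
          (1 - a * c ^ 2) *
            ((1 - a * q) * basicHypergeometricTerm (a * q ^ 2) b (a * c * q ^ 2) q (-c) i)) =
      -(a * c * (1 - c) * (1 - b * q ^ n) *
        basicHypergeometricTerm (a * q) b (a * c * q ^ 2) q (-c) n) := by
  have hq : X ∣ q := hbc ▸ hc.mul_left b
  have hacq : X ∣ a * c * q ^ 2 := (hc.mul_left a).mul_right _
  simp only [baileyDaum_summand a b (-c) hc hq]
  induction n with
  | zero =>
    simp only [zero_add, sum_range_one, basicHypergeometricTerm, qPochhammer_zero, pow_zero,
      mul_one, Ring.inverse_one]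
    linear_combination -a * (1 - c) * hbc
  | succ n ih =>
    have hrec := basicHypergeometricTerm_succ a b hacq hq (-c) n
    have hrec' := basicHypergeometricTerm_succ (a * q) b hacq hq (-c) n
    have ha := one_sub_mul_basicHypergeometricTerm_mul_left a b (a * c * q ^ 2) q (-c) n
    rw [sum_range_succ, ih]
    refine ((isUnit_one_sub_of_X_dvd (dvd_pow hq n.add_one_ne_zero)).mul
      (isUnit_one_sub_of_X_dvd (hacq.mul_right (q ^ n)))).mul_left_cancel ?_
    linear_combination
      (1 - a * c * q ^ (n + 1)) * (1 - a * c * q ^ (n + 2)) *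
        (hrec + (1 - b * q ^ n) * c * ha) +
      (a * c * (1 - c) * (1 - b * q ^ (n + 1)) - (1 - a * c ^ 2) * (1 - a * q ^ (n + 2))) * hrec' +
      a * c * (1 - c) * q ^ (n + 1) * (1 - a * q ^ (n + 1)) * (1 - b * q ^ n) *
        basicHypergeometricTerm (a * q) b (a * c * q ^ 2) q (-c) n * hbc

end PowerSeries

section Infinite

variable {R : Type*} [CommRing R] [TopologicalSpace R]

/-- The infinite `q`-Pochhammer symbol `(a; q)_∞`, convergent when `X ∣ q`. -/
noncomputable def qPochhammerInf (a q : R⟦X⟧) : R⟦X⟧ :=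
  ∏' n, (1 - a * q ^ n)

/-- The basic hypergeometric series `₂φ₁(a, b; c; q, z)`, convergent when `X ∣ z`. -/
noncomputable def basicHypergeometric (a b c q z : R⟦X⟧) : R⟦X⟧ :=
  ∑' n, basicHypergeometricTerm a b c q z n

@[simp]
theorem zero_qPochhammerInf (q : R⟦X⟧) : qPochhammerInf 0 q = 1 := by
  simp [qPochhammerInf]

theorem summable_basicHypergeometricTerm (a b c q : R⟦X⟧) {z : R⟦X⟧} (hz : X ∣ z) :
    Summable (basicHypergeometricTerm a b c q z) :=
  summable_of_X_pow_dvd (X_pow_dvd_basicHypergeometricTerm a b hz)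

theorem basicHypergeometric_zero (a b c q : R⟦X⟧) : basicHypergeometric a b c q 0 = 1 := by
  rw [basicHypergeometric, tsum_eq_single 0 fun n hn => by
    rw [basicHypergeometricTerm, zero_pow hn, mul_zero]]
  simp [basicHypergeometricTerm]

theorem hasProd_qPochhammerInf {q : R⟦X⟧} (hq : X ∣ q) (a : R⟦X⟧) :
    HasProd (fun n => 1 - a * q ^ n) (qPochhammerInf a q) :=
  (multipliable_one_sub_mul_pow hq a).hasProd

variable [IsTopologicalRing R] [T2Space R] {q : R⟦X⟧}

theorem X_pow_dvd_basicHypergeometric_sub {a a' c c' z z' : R⟦X⟧} {m : ℕ} (b : R⟦X⟧)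
    (hc : X ∣ c) (hc' : X ∣ c') (hq : X ∣ q) (hz : X ∣ z) (hz' : X ∣ z')
    (haa' : X ^ m ∣ a - a') (hcc' : X ^ m ∣ c - c') (hzz' : X ^ m ∣ z - z') :
    X ^ m ∣ basicHypergeometric a b c q z - basicHypergeometric a' b c' q z' := by
  rw [basicHypergeometric, basicHypergeometric, ← Summable.tsum_sub
    (summable_basicHypergeometricTerm a b c q hz) (summable_basicHypergeometricTerm a' b c' q hz')]
  exact X_pow_dvd_tsum (X_pow_dvd_basicHypergeometricTerm_sub b hc hc' hq haa' hcc' hzz')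

theorem qPochhammer_mul_qPochhammerInf (hq : X ∣ q) (a : R⟦X⟧) (n : ℕ) :
    qPochhammer a q n * qPochhammerInf (a * q ^ n) q = qPochhammerInf a q := by
  have hshift (i : ℕ) : 1 - a * q ^ n * q ^ i = 1 - a * q ^ (i + n) := by ring
  have hmul := multipliable_one_sub_mul_pow hq (a * q ^ n)
  simp only [qPochhammer, qPochhammerInf, hshift] at hmul ⊢
  exact hmul.prod_mul_tprod_nat_mul' (f := fun i => 1 - a * q ^ i)

theorem qPochhammerInf_mul_qPochhammerInf_sq (hq : X ∣ q) (a : R⟦X⟧) :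
    qPochhammerInf a (q ^ 2) * qPochhammerInf (a * q) (q ^ 2) = qPochhammerInf a q := by
  have heven (i : ℕ) : 1 - a * (q ^ 2) ^ i = 1 - a * q ^ (2 * i) := by ring
  have hodd (i : ℕ) : 1 - a * q * (q ^ 2) ^ i = 1 - a * q ^ (2 * i + 1) := by ring
  have hq2 : X ∣ q ^ 2 := dvd_pow hq two_ne_zero
  have hmul_even := multipliable_one_sub_mul_pow hq2 a
  have hmul_odd := multipliable_one_sub_mul_pow hq2 (a * q)
  simp only [qPochhammerInf, heven, hodd] at hmul_even hmul_odd ⊢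
  exact tprod_even_mul_odd (f := fun n => 1 - a * q ^ n) hmul_even hmul_odd

theorem qPochhammerInf_mul_qPochhammerInf_neg (hq : X ∣ q) (a : R⟦X⟧) :
    qPochhammerInf a q * qPochhammerInf (-a) q = qPochhammerInf (a ^ 2) (q ^ 2) := by
  rw [qPochhammerInf, qPochhammerInf, ← (multipliable_one_sub_mul_pow hq a).tprod_mul
    (multipliable_one_sub_mul_pow hq (-a))]
  exact tprod_congr fun n => by ring

theorem one_sub_mul_basicHypergeometric_zero_zero (hq : X ∣ q) (a : R⟦X⟧) {z : R⟦X⟧} (hz : X ∣ z) :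
    (1 - z) * basicHypergeometric 0 a 0 q z =
      (1 - a * z) * basicHypergeometric 0 a 0 q (z * q) := by
  set t := basicHypergeometricTerm 0 a 0 q z
  have hshift (n : ℕ) : basicHypergeometricTerm 0 a 0 q (z * q) n = t n * q ^ n :=
    (basicHypergeometricTerm_mul_pow 0 a 0 q z q n).symm
  have hrec (n : ℕ) : (1 - q ^ (n + 1)) * t (n + 1) = (1 - a * q ^ n) * z * t n := by
    simpa using basicHypergeometricTerm_succ 0 a (dvd_zero X) hq z n
  have hpartial (n : ℕ) :
      ∑ i ∈ range n, ((1 - z) * t i - (1 - a * z) * (t i * q ^ i)) = -(t n * (1 - q ^ n)) := by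
    induction n with
    | zero => simp
    | succ n ih =>
      rw [sum_range_succ, ih]
      linear_combination hrec n
  have ht_summable : Summable t := summable_basicHypergeometricTerm 0 a 0 q hz
  have hs_summable : Summable fun n => t n * q ^ n := by
    simpa only [← hshift] using summable_basicHypergeometricTerm 0 a 0 q (hz.mul_right q)
  have hzero := hasSum_zero_of_X_pow_dvd_sum_range
    ((ht_summable.mul_left (1 - z)).sub (hs_summable.mul_left (1 - a * z))) fun n => by
      rw [hpartial]
      exact ((X_pow_dvd_basicHypergeometricTerm 0 a hz n).mul_right _).neg_right
  have hsub := ((ht_summable.hasSum.mul_left (1 - z)).sub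
    (hs_summable.hasSum.mul_left (1 - a * z))).unique hzero
  simpa only [basicHypergeometric, hshift] using sub_eq_zero.1 hsub

theorem qBinomial_theorem (hq : X ∣ q) (a : R⟦X⟧) {z : R⟦X⟧} (hz : X ∣ z) :
    basicHypergeometric 0 a 0 q z * qPochhammerInf z q = qPochhammerInf (a * z) q := by
  have hlim : Tendsto (fun n => basicHypergeometric 0 a 0 q (z * q ^ n)) atTop (𝓝 1) := by
    rw [← basicHypergeometric_zero 0 a 0 q]
    refine tendsto_of_X_pow_dvd_sub fun n => ?_
    refine X_pow_dvd_basicHypergeometric_sub a (dvd_zero _) (dvd_zero _) hq (hz.mul_right _)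
      (dvd_zero _) (by simp) (by simp) ?_
    simpa using (pow_dvd_pow_of_dvd hq n).mul_left z
  have hiter := mul_eq_mul_of_hasProd_of_tendsto (hasProd_qPochhammerInf hq z)
    (hasProd_qPochhammerInf hq (a * z)) hlim fun n => by
      simpa only [pow_succ, mul_assoc] using
        one_sub_mul_basicHypergeometric_zero_zero hq a (hz.mul_right (q ^ n))
  simpa only [pow_zero, mul_one, mul_comm] using hiter

theorem isUnit_qPochhammerInf (hq : X ∣ q) {z : R⟦X⟧} (hz : X ∣ z) :
    IsUnit (qPochhammerInf z q) :=
  IsUnit.of_mul_eq_one_right _ (by simpa using qBinomial_theorem hq 0 hz)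

theorem qPochhammerInf_neg_self_mul_qPochhammerInf_sq (hq : X ∣ q) :
    qPochhammerInf (-q) q * qPochhammerInf q (q ^ 2) = 1 := by
  have hunit : IsUnit (qPochhammerInf (q ^ 2) (q ^ 2)) :=
    isUnit_qPochhammerInf (dvd_pow hq two_ne_zero) (dvd_pow hq two_ne_zero)
  have hsplit := qPochhammerInf_mul_qPochhammerInf_sq hq q
  rw [← sq] at hsplit
  refine hunit.mul_left_cancel ?_
  linear_combination qPochhammerInf (-q) q * hsplit + qPochhammerInf_mul_qPochhammerInf_neg hq q

section BaileyDaum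

variable {b c : R⟦X⟧}

theorem baileyDaum_functional_equation (hbc : b * c = q) (hc : X ∣ c) (a : R⟦X⟧) :
    (1 - a * c) * (1 - a * c * q) * basicHypergeometric a b (a * c) q (-c) =
      (1 - a * c ^ 2) * ((1 - a * q) *
        basicHypergeometric (a * q ^ 2) b (a * c * q ^ 2) q (-c)) := by
  have hnc : X ∣ -c := hc.neg_right
  have hleft := (summable_basicHypergeometricTerm a b (a * c) q hnc).hasSum.mul_left
    ((1 - a * c) * (1 - a * c * q))
  have hright := ((summable_basicHypergeometricTerm (a * q ^ 2) b (a * c * q ^ 2) q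
    hnc).hasSum.mul_left (1 - a * q)).mul_left (1 - a * c ^ 2)
  refine sub_eq_zero.1 ((hleft.sub hright).unique ?_)
  refine hasSum_zero_of_X_pow_dvd_sum_range (hleft.sub hright).summable fun n => ?_
  cases n with
  | zero => simp
  | succ n =>
    rw [baileyDaum_sum_range hbc hc, pow_succ']
    have hterm := mul_dvd_mul hc (X_pow_dvd_basicHypergeometricTerm (q := q) (c := a * c * q ^ 2)
      (a * q) b hnc n)
    exact (hterm.trans (Dvd.intro_left (a * (1 - c) * (1 - b * q ^ n)) (by ring))).neg_right

theorem baileyDaum_theorem (hbc : b * c = q) (hc : X ∣ c) (a : R⟦X⟧) :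
    basicHypergeometric a b (a * c) q (-c) *
        (qPochhammerInf (a * c) q * qPochhammerInf (-c) q) =
      qPochhammerInf (-q) q * qPochhammerInf (a * q) (q ^ 2) *
        qPochhammerInf (a * c ^ 2) (q ^ 2) := by
  have hq : X ∣ q := hbc ▸ hc.mul_left b
  have hq2 : X ∣ q ^ 2 := dvd_pow hq two_ne_zero
  have hnc : X ∣ -c := hc.neg_right
  set F : ℕ → R⟦X⟧ := fun n =>
    basicHypergeometric (a * (q ^ 2) ^ n) b (a * (q ^ 2) ^ n * c) q (-c) with hF
  have hdvd (n : ℕ) : X ^ n ∣ a * (q ^ 2) ^ n := (pow_dvd_pow_of_dvd hq2 n).mul_left a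
  have hlim : Tendsto F atTop (𝓝 (basicHypergeometric 0 b 0 q (-c))) :=
    tendsto_of_X_pow_dvd_sub fun n => X_pow_dvd_basicHypergeometric_sub b (hc.mul_left _)
      (dvd_zero X) hq hnc hnc (by simpa using hdvd n) (by simpa using (hdvd n).mul_right c)
      (by simp)
  have hstep (n : ℕ) : (1 - a * c * (q ^ 2) ^ n) * (1 - a * c * q * (q ^ 2) ^ n) * F n =
      (1 - a * c ^ 2 * (q ^ 2) ^ n) * (1 - a * q * (q ^ 2) ^ n) * F (n + 1) := by
    have hfun := baileyDaum_functional_equation hbc hc (a * (q ^ 2) ^ n)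
    rw [mul_right_comm _ c (q ^ 2), mul_assoc a _ (q ^ 2), ← pow_succ] at hfun
    linear_combination hfun
  have hiter := mul_eq_mul_of_hasProd_of_tendsto
    ((hasProd_qPochhammerInf hq2 (a * c)).mul (hasProd_qPochhammerInf hq2 (a * c * q)))
    ((hasProd_qPochhammerInf hq2 (a * c ^ 2)).mul (hasProd_qPochhammerInf hq2 (a * q)))
    hlim hstep
  rw [qPochhammerInf_mul_qPochhammerInf_sq hq] at hiter
  have hbinom := qBinomial_theorem hq b hnc
  rw [mul_neg, hbc] at hbinom
  simp only [hF, pow_zero, mul_one] at hiter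
  linear_combination qPochhammerInf (-c) q * hiter +
    qPochhammerInf (a * c ^ 2) (q ^ 2) * qPochhammerInf (a * q) (q ^ 2) * hbinom

end BaileyDaum

theorem basicHypergeometricTerm_mul_basicHypergeometric (hq : X ∣ q) (n : ℕ) :
    basicHypergeometricTerm 0 (-1) 0 (q ^ 2) (-q) n *
        basicHypergeometric 0 (-1) 0 (q ^ 2) (q * (q ^ 2) ^ n) * qPochhammerInf q (q ^ 2) =
      qPochhammerInf (-q) (q ^ 2) * basicHypergeometricTerm (-1) q (-q) (q ^ 2) (-q) n := by
  have hq2 : X ∣ q ^ 2 := dvd_pow hq two_ne_zero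
  have hbinom := qBinomial_theorem hq2 (-1) (hq.mul_right ((q ^ 2) ^ n))
  have hsplit := qPochhammer_mul_qPochhammerInf hq2 q n
  have hsplit_neg := qPochhammer_mul_qPochhammerInf hq2 (-q) n
  have hunit := isUnit_qPochhammer_mul_qPochhammer hq.neg_right hq2 n
  have hright := basicHypergeometricTerm_mul_cancel (a := -1) (b := q) (z := -q) hunit
  have hleft := basicHypergeometricTerm_mul_cancel (a := 0) (b := -1) (z := -q)
    (isUnit_qPochhammer_mul_qPochhammer (dvd_zero X) hq2 n)
  rw [zero_qPochhammer, mul_one, one_mul] at hleft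
  rw [neg_one_mul, ← neg_mul] at hbinom
  refine hunit.mul_right_cancel ?_
  linear_combination
    basicHypergeometric 0 (-1) 0 (q ^ 2) (q * (q ^ 2) ^ n) * qPochhammerInf q (q ^ 2) *
      qPochhammer (-q) (q ^ 2) n * hleft -
    qPochhammerInf (-q) (q ^ 2) * hright +
    qPochhammer (-1) (q ^ 2) n * (-q) ^ n *
      (qPochhammer q (q ^ 2) n * (qPochhammer (-q) (q ^ 2) n * hbinom + hsplit_neg) -
        basicHypergeometric 0 (-1) 0 (q ^ 2) (q * (q ^ 2) ^ n) * qPochhammer (-q) (q ^ 2) n *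
          hsplit)

theorem tsum_basicHypergeometricTerm_mul_basicHypergeometric (hq : X ∣ q) :
    ∑' n, basicHypergeometricTerm 0 (-1) 0 (q ^ 2) (-q) n *
        basicHypergeometric 0 (-1) 0 (q ^ 2) (q * (q ^ 2) ^ n) =
      (qPochhammerInf (-q ^ 2) (q ^ 2) * qPochhammerInf (-q ^ 2) ((q ^ 2) ^ 2)) ^ 2 := by
  have hq2 : X ∣ q ^ 2 := dvd_pow hq two_ne_zero
  have hsummable : Summable fun n => basicHypergeometricTerm 0 (-1) 0 (q ^ 2) (-q) n *
      basicHypergeometric 0 (-1) 0 (q ^ 2) (q * (q ^ 2) ^ n) :=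
    summable_of_X_pow_dvd fun n =>
      (X_pow_dvd_basicHypergeometricTerm 0 (-1) hq.neg_right n).mul_right _
  have hbaileyDaum := baileyDaum_theorem (b := q) (c := q) (sq q).symm hq (-1)
  have heuler := qPochhammerInf_neg_self_mul_qPochhammerInf_sq hq2
  rw [neg_one_mul, neg_one_mul] at hbaileyDaum
  rw [← qPochhammerInf_mul_qPochhammerInf_neg hq2 q] at heuler
  refine (isUnit_qPochhammerInf hq2 hq).mul_right_cancel ?_
  rw [← hsummable.tsum_mul_right, tsum_congr (basicHypergeometricTerm_mul_basicHypergeometric hq),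
    (summable_basicHypergeometricTerm _ _ _ _ hq.neg_right).tsum_mul_left, ← basicHypergeometric]
  linear_combination
    qPochhammerInf (-q ^ 2) (q ^ 2) * qPochhammerInf q (q ^ 2) * hbaileyDaum -
    qPochhammerInf (-q) (q ^ 2) * basicHypergeometric (-1) q (-q) (q ^ 2) (-q) * heuler

end Infinite

/-- Overpartitions into odd parts. -/
@[ext]
structure OddOverpartition where
  parts : Multiset ℕ
  overlined : Finset ℕ
  odd_of_mem_parts : ∀ x ∈ parts, Odd x
  overlined_subset : overlined ⊆ parts.toFinset

namespace OddOverpartition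

/-- The size of an overpartition, that is, the sum of its parts. -/
def size (a : OddOverpartition) : ℕ :=
  a.parts.sum

/-- The number `ν` of parts of an overpartition. -/
def numParts (a : OddOverpartition) : ℕ :=
  Multiset.card a.parts

/-- The overpartition obtained by increasing every part by `2`. -/
def shift (a : OddOverpartition) : OddOverpartition where
  parts := a.parts.map (· + 2)
  overlined := a.overlined.map (addRightEmbedding 2)
  odd_of_mem_parts := by
    simpa using fun x hx => (a.odd_of_mem_parts x hx).add_even even_two
  overlined_subset := by
    simpa [Finset.subset_iff] using fun x hx => Multiset.mem_toFinset.1 (a.overlined_subset hx)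

/-- The overpartition obtained by adding a part `1`, overlined only if there already was an
overlined `1`. -/
def addOne (a : OddOverpartition) : OddOverpartition where
  parts := 1 ::ₘ a.parts
  overlined := a.overlined
  odd_of_mem_parts := by simpa using a.odd_of_mem_parts
  overlined_subset := a.overlined_subset.trans
    (Multiset.toFinset_subset.2 (Multiset.subset_cons _ _))

/-- The overpartition obtained by adding a part `1` and overlining the part size `1`. -/
def addOverlinedOne (a : OddOverpartition) : OddOverpartition where
  parts := 1 ::ₘ a.parts
  overlined := insert 1 a.overlined
  odd_of_mem_parts := by simpa using a.odd_of_mem_parts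
  overlined_subset := by
    rw [Multiset.toFinset_cons]
    exact insert_subset_insert 1 a.overlined_subset

@[simp]
theorem numParts_shift (a : OddOverpartition) : a.shift.numParts = a.numParts :=
  Multiset.card_map _ _

@[simp]
theorem numParts_addOne (a : OddOverpartition) : a.addOne.numParts = a.numParts + 1 :=
  Multiset.card_cons _ _

@[simp]
theorem numParts_addOverlinedOne (a : OddOverpartition) :
    a.addOverlinedOne.numParts = a.numParts + 1 :=
  Multiset.card_cons _ _

@[simp]
theorem size_shift (a : OddOverpartition) : a.shift.size = a.size + 2 * a.numParts := by
  simp [size, shift, numParts, Multiset.sum_map_add, mul_comm]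

@[simp]
theorem size_addOne (a : OddOverpartition) : a.addOne.size = 1 + a.size :=
  Multiset.sum_cons _ _

@[simp]
theorem size_addOverlinedOne (a : OddOverpartition) : a.addOverlinedOne.size = 1 + a.size :=
  Multiset.sum_cons _ _

theorem one_notMem_parts_shift (a : OddOverpartition) : 1 ∉ a.shift.parts := by
  simp [shift]

theorem one_notMem_overlined_shift (a : OddOverpartition) : 1 ∉ a.shift.overlined := fun h =>
  a.one_notMem_parts_shift (Multiset.mem_toFinset.1 (a.shift.overlined_subset h))

theorem shift_injective : Function.Injective shift := fun a b h => by
  simp only [shift, OddOverpartition.mk.injEq, Finset.map_inj] at h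
  exact OddOverpartition.ext (Multiset.map_injective (add_left_injective 2) h.1) h.2

theorem addOne_injective : Function.Injective addOne := fun a b h => by
  simpa [addOne, OddOverpartition.ext_iff] using h

theorem addOverlinedOne_comp_shift_injective :
    Function.Injective (addOverlinedOne ∘ shift) := fun a b h => by
  simp only [Function.comp_apply, addOverlinedOne, OddOverpartition.mk.injEq,
    Multiset.cons_inj_right] at h
  refine shift_injective (OddOverpartition.ext h.1 ?_)
  rw [← erase_insert a.one_notMem_overlined_shift, h.2, erase_insert b.one_notMem_overlined_shift]

theorem exists_shift_eq {a : OddOverpartition} (ha : 1 ∉ a.parts) : ∃ b, shift b = a := by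
  have hsub {x : ℕ} (hx : x ∈ a.parts) : x - 2 + 2 = x := by
    obtain ⟨k, rfl⟩ := a.odd_of_mem_parts x hx
    have : k ≠ 0 := by rintro rfl; exact ha hx
    lia
  have hsub' {x : ℕ} (hx : x ∈ a.overlined) : x - 2 + 2 = x :=
    hsub (Multiset.mem_toFinset.1 (a.overlined_subset hx))
  refine ⟨⟨a.parts.map (· - 2), a.overlined.image (· - 2), ?_, ?_⟩, ?_⟩
  · simp only [Multiset.mem_map, forall_exists_index, and_imp, forall_apply_eq_imp_iff₂]
    intro x hx
    have := a.odd_of_mem_parts x hx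
    rw [← hsub hx] at this
    simpa [parity_simps] using this
  · rw [Multiset.toFinset_map]
    exact image_subset_image a.overlined_subset
  · ext1
    · simpa [shift, Multiset.map_map] using
        (Multiset.map_congr rfl fun x hx => hsub hx).trans a.parts.map_id'
    · simp only [shift, map_eq_image, image_image]
      exact (image_congr fun x hx => hsub' hx).trans image_id

theorem addOne_ne_addOverlinedOne_shift (a b : OddOverpartition) :
    a.addOne ≠ b.shift.addOverlinedOne := fun h => by
  simp only [addOne, addOverlinedOne, OddOverpartition.mk.injEq, Multiset.cons_inj_right] at h
  have hmem : 1 ∈ a.overlined := h.2 ▸ mem_insert_self 1 _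
  exact b.one_notMem_parts_shift (h.1 ▸ Multiset.mem_toFinset.1 (a.overlined_subset hmem))

theorem exists_addOne_eq_or_exists_addOverlinedOne_shift_eq {a : OddOverpartition}
    (ha : 1 ∈ a.parts) : (∃ b, addOne b = a) ∨ ∃ b, addOverlinedOne (shift b) = a := by
  have hodd : ∀ x ∈ a.parts.erase 1, Odd x := fun x hx =>
    a.odd_of_mem_parts x (Multiset.mem_of_mem_erase hx)
  -- If what remains without a `1` no longer supports an overlined `1`, it has no part `1` left.
  by_cases hsub : a.overlined ⊆ (a.parts.erase 1).toFinset
  · exact .inl ⟨⟨a.parts.erase 1, a.overlined, hodd, hsub⟩,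
      OddOverpartition.ext (Multiset.cons_erase ha) rfl⟩
  have herase : a.overlined.erase 1 ⊆ (a.parts.erase 1).toFinset := fun x hx => by
    obtain ⟨hne, hx⟩ := mem_erase.1 hx
    exact Multiset.mem_toFinset.2 <|
      (Multiset.mem_erase_of_ne hne).2 (Multiset.mem_toFinset.1 (a.overlined_subset hx))
  have hone : 1 ∈ a.overlined := by
    by_contra hone
    exact hsub (erase_eq_of_notMem hone ▸ herase)
  obtain ⟨b, hb⟩ := exists_shift_eq
    (a := ⟨a.parts.erase 1, a.overlined.erase 1, hodd, herase⟩) fun hmem => hsub <| by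
      rw [← insert_erase hone]
      exact insert_subset (Multiset.mem_toFinset.2 hmem) herase
  exact .inr ⟨b, hb ▸ OddOverpartition.ext (Multiset.cons_erase ha) (insert_erase hone)⟩

theorem bijective_sumElim :
    Function.Bijective (Sum.elim shift (Sum.elim addOne (addOverlinedOne ∘ shift))) := by
  refine ⟨shift_injective.sumElim
    (addOne_injective.sumElim addOverlinedOne_comp_shift_injective
      addOne_ne_addOverlinedOne_shift) ?_, fun a => ?_⟩
  · rintro a (b | b) h <;>
      exact a.one_notMem_parts_shift (h ▸ Multiset.mem_cons_self 1 _)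
  · by_cases ha : 1 ∈ a.parts
    · obtain ⟨b, rfl⟩ | ⟨b, rfl⟩ := exists_addOne_eq_or_exists_addOverlinedOne_shift_eq ha
      · exact ⟨.inr (.inl b), rfl⟩
      · exact ⟨.inr (.inr b), rfl⟩
    · obtain ⟨b, rfl⟩ := exists_shift_eq ha
      exact ⟨.inl b, rfl⟩

theorem finite_setOf_size_le (n : ℕ) : {a : OddOverpartition | a.size ≤ n}.Finite := by
  have hfin := (Set.finite_Iic (n • Multiset.range (n + 1))).prod
    (range (n + 1)).powerset.finite_toSet
  refine (hfin.preimage (f := fun a : OddOverpartition => (a.parts, a.overlined))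
    (fun _ _ _ _ h => OddOverpartition.ext (congrArg Prod.fst h) (congrArg Prod.snd h))).subset
    fun a (ha : a.parts.sum ≤ n) => ?_
  have hmem {x : ℕ} (hx : x ∈ a.parts) : x ∈ Multiset.range (n + 1) :=
    Multiset.mem_range.2 (Nat.lt_succ_of_le ((Multiset.le_sum_of_mem hx).trans ha))
  have hcard : Multiset.card a.parts ≤ n := by
    refine le_trans ?_ ha
    simpa using Multiset.card_nsmul_le_sum (a := 1) fun x hx => (a.odd_of_mem_parts x hx).pos
  refine ⟨Multiset.le_iff_count.2 fun x => ?_, mem_coe.2 <| mem_powerset.2 fun x hx =>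
    hmem (Multiset.mem_toFinset.1 (a.overlined_subset hx))⟩
  by_cases hx : x ∈ a.parts
  · rw [Multiset.count_nsmul, Multiset.count_eq_one_of_mem (Multiset.nodup_range _) (hmem hx),
      mul_one]
    exact (Multiset.count_le_card x _).trans hcard
  · simp [hx]

theorem hasSum_of_hasSum_shift {M : Type*} [AddCommMonoid M] [TopologicalSpace M] [ContinuousAdd M]
    {f : OddOverpartition → M} {x y z : M} (hx : HasSum (fun a => f (shift a)) x)
    (hy : HasSum (fun a => f (addOne a)) y)
    (hz : HasSum (fun a => f (addOverlinedOne (shift a))) z) : HasSum f (x + (y + z)) :=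
  (Equiv.ofBijective _ bijective_sumElim).hasSum_iff.1
    (HasSum.sum (f := f ∘ Sum.elim shift (Sum.elim addOne (addOverlinedOne ∘ shift))) hx
      (HasSum.sum hy hz))

section GeneratingFunction

variable {R : Type*} [CommRing R] [TopologicalSpace R]

theorem summable_X_pow_size_mul (f : OddOverpartition → R⟦X⟧) :
    Summable fun a : OddOverpartition => X ^ a.size * f a :=
  summable_X_pow_mul finite_setOf_size_le f

theorem tsum_setOf_numParts_eq (n : ℕ) :
    ∑' a : {a : OddOverpartition | a.numParts = n}, (X : R⟦X⟧) ^ a.1.size =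
      ∑' a : OddOverpartition, X ^ a.size * (if a.numParts = n then 1 else 0) := by
  rw [_root_.tsum_subtype _ fun a : OddOverpartition => (X : R⟦X⟧) ^ a.size]
  simp only [Set.indicator_apply, Set.mem_ofPred_eq, mul_ite, mul_one, mul_zero]

theorem tsum_X_pow_size_of_numParts_eq_zero :
    ∑' a : {a : OddOverpartition | a.numParts = 0}, (X : R⟦X⟧) ^ a.1.size = 1 := by
  have hempty : {a : OddOverpartition | a.numParts = 0} = {⟨0, ∅, by simp, by simp⟩} := by
    refine Set.eq_singleton_iff_unique_mem.2 ⟨rfl, fun a ha => ?_⟩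
    have hparts : a.parts = 0 := Multiset.card_eq_zero.1 ha
    exact OddOverpartition.ext hparts (subset_empty.1 (by simpa [hparts] using a.overlined_subset))
  rw [hempty, _root_.tsum_singleton _ fun a : OddOverpartition => (X : R⟦X⟧) ^ a.size]
  exact pow_zero X

variable [IsTopologicalRing R] [T2Space R]

theorem tsum_X_pow_size_mul_eq_add (g : OddOverpartition → R⟦X⟧) :
    ∑' a : OddOverpartition, X ^ a.size * g a =
      ∑' a : OddOverpartition, X ^ a.size * (X ^ (2 * a.numParts) * g (shift a)) +
        (X * ∑' a : OddOverpartition, X ^ a.size * g (addOne a) +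
          X * ∑' a : OddOverpartition,
            X ^ a.size * (X ^ (2 * a.numParts) * g (addOverlinedOne (shift a)))) := by
  have hsum (f : OddOverpartition → R⟦X⟧) := (summable_X_pow_size_mul f).hasSum
  refine (hasSum_of_hasSum_shift ?_ ?_ ?_).tsum_eq
  · simpa only [size_shift, pow_add, mul_assoc] using hsum _
  · simpa only [size_addOne, pow_add, pow_one, mul_assoc] using (hsum _).mul_left X
  · simpa only [size_addOverlinedOne, size_shift, pow_add, pow_one, mul_assoc] using
      (hsum _).mul_left X

theorem one_sub_mul_tsum_X_pow_size_of_numParts_eq_succ (n : ℕ) :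
    (1 - (X ^ 2) ^ (n + 1)) *
        ∑' a : {a : OddOverpartition | a.numParts = n + 1}, (X : R⟦X⟧) ^ a.1.size =
      (1 + (X ^ 2) ^ n) * X * ∑' a : {a : OddOverpartition | a.numParts = n}, X ^ a.1.size := by
  have hscale (n : ℕ) : ∑' a : OddOverpartition, (X : R⟦X⟧) ^ a.size * (X ^ (2 * a.numParts) *
      (if a.numParts = n then 1 else 0)) = (X ^ 2) ^ n *
      ∑' a : OddOverpartition, X ^ a.size * (if a.numParts = n then 1 else 0) := by
    rw [← (summable_X_pow_size_mul (R := R) _).tsum_mul_left]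
    refine tsum_congr fun a => ?_
    split_ifs with h
    · rw [h, pow_mul, mul_left_comm]
    · simp only [mul_zero]
  have hadd := tsum_X_pow_size_mul_eq_add fun a : OddOverpartition =>
    if a.numParts = n + 1 then (1 : R⟦X⟧) else 0
  simp only [numParts_shift, numParts_addOne, numParts_addOverlinedOne, Nat.add_right_cancel_iff,
    hscale] at hadd
  simp only [tsum_setOf_numParts_eq]
  linear_combination hadd

theorem tsum_X_pow_size_of_numParts_eq (n : ℕ) :
    ∑' a : {a : OddOverpartition | a.numParts = n}, (X : R⟦X⟧) ^ a.1.size =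
      basicHypergeometricTerm 0 (-1) 0 (X ^ 2) X n := by
  have hX : (X : R⟦X⟧) ∣ X ^ 2 := dvd_pow_self X two_ne_zero
  induction n with
  | zero => simp [tsum_X_pow_size_of_numParts_eq_zero, basicHypergeometricTerm]
  | succ n ih =>
    have hterm := basicHypergeometricTerm_succ 0 (-1) (dvd_zero X) hX X n
    refine (isUnit_one_sub_of_X_dvd (dvd_pow hX n.add_one_ne_zero)).mul_left_cancel ?_
    rw [← ih] at hterm
    linear_combination one_sub_mul_tsum_X_pow_size_of_numParts_eq_succ (R := R) n - hterm

theorem tsum_X_pow_size_mul (h : ℕ → R⟦X⟧) :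
    ∑' a : OddOverpartition, X ^ a.size * h a.numParts =
      ∑' n, basicHypergeometricTerm 0 (-1) 0 (X ^ 2) X n * h n := by
  have hsum (n : ℕ) (f : {a : OddOverpartition | a.numParts = n} → R⟦X⟧) :
      Summable fun a : {a : OddOverpartition | a.numParts = n} => X ^ a.1.size * f a :=
    summable_X_pow_mul (w := fun a : {a : OddOverpartition | a.numParts = n} => a.1.size)
      (fun m => (finite_setOf_size_le m).preimage Subtype.val_injective.injOn) _
  rw [← (Equiv.sigmaFiberEquiv numParts).tsum_eq]
  refine (Summable.tsum_sigma' (hsum · _) ?_).trans (tsum_congr fun n => ?_)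
  · exact (Equiv.sigmaFiberEquiv numParts).summable_iff.2
      (summable_X_pow_size_mul fun a => h a.numParts)
  · have hone := hsum n 1
    simp only [Pi.one_apply, mul_one] at hone
    rw [← tsum_X_pow_size_of_numParts_eq, ← hone.tsum_mul_right]
    exact tsum_congr fun a => congrArg (X ^ a.1.size * h ·) a.2

end GeneratingFunction

end OddOverpartition

section Overcopartition

open OddOverpartition

/-- The size of the `(1,1,2)`-overcopartition `(γ̄, ρ, σ̄)` with `(γ̄, σ̄) = p`; the partition `ρ`
is determined by `p`. -/
def overcopartitionSize (p : OddOverpartition × OddOverpartition) : ℕ :=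
  p.1.size + p.2.size + 2 * p.1.numParts * p.2.numParts

/-- The `(1,1,2)`-overcopartition `(γ̄, ρ, σ̄)` with `(γ̄, σ̄) = p`. -/
def toOvercopartition (p : OddOverpartition × OddOverpartition) :
    (Multiset ℕ × Finset ℕ) × Multiset ℕ × (Multiset ℕ × Finset ℕ) :=
  ((p.1.parts, p.1.overlined), Multiset.replicate p.2.numParts (2 * p.1.numParts),
    (p.2.parts, p.2.overlined))

theorem toOvercopartition_injective : Function.Injective toOvercopartition := fun p p' h => by
  simp only [toOvercopartition, Prod.mk.injEq] at h
  exact Prod.ext (OddOverpartition.ext h.1.1 h.1.2) (OddOverpartition.ext h.2.2.1 h.2.2.2)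

theorem toOvercopartition_mem_overCPSet_iff {p : OddOverpartition × OddOverpartition} {n : ℕ} :
    toOvercopartition p ∈ overCPSet n ↔ overcopartitionSize p = n := by
  have hsum : p.1.parts.sum + (Multiset.replicate p.2.numParts (2 * p.1.numParts)).sum +
      p.2.parts.sum = overcopartitionSize p := by
    simp only [Multiset.sum_replicate, smul_eq_mul, overcopartitionSize, size]
    ring
  rw [← hsum]
  exact ⟨fun h => h.2.2.2.2.2, fun h => ⟨p.1.odd_of_mem_parts, p.1.overlined_subset,
    p.2.odd_of_mem_parts, p.2.overlined_subset, rfl, h⟩⟩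

theorem overCPSet_subset_range (n : ℕ) : overCPSet n ⊆ Set.range toOvercopartition := by
  rintro ⟨γ, ρ, σ⟩ ⟨hγ, hS, hσ, hT, hρ, -⟩
  exact ⟨(⟨γ.1, γ.2, hγ, hS⟩, ⟨σ.1, σ.2, hσ, hT⟩), Prod.ext rfl (Prod.ext hρ.symm rfl)⟩

theorem ncard_sep_overCPSet (n : ℕ) (P : ℕ → Prop) :
    {t ∈ overCPSet n | P (Multiset.card t.1.1)}.ncard =
      {p | overcopartitionSize p = n ∧ P p.1.numParts}.ncard := by
  rw [← Set.ncard_image_of_injective _ toOvercopartition_injective]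
  congr 1
  ext t
  constructor
  · rintro ⟨ht, hP⟩
    obtain ⟨p, rfl⟩ := overCPSet_subset_range n ht
    exact ⟨p, ⟨toOvercopartition_mem_overCPSet_iff.1 ht, hP⟩, rfl⟩
  · rintro ⟨p, ⟨hp, hP⟩, rfl⟩
    exact ⟨toOvercopartition_mem_overCPSet_iff.2 hp, hP⟩

theorem finite_setOf_overcopartitionSize_le (n : ℕ) :
    {p | overcopartitionSize p ≤ n}.Finite := by
  refine ((finite_setOf_size_le n).prod (finite_setOf_size_le n)).subset fun p hp => ?_
  simp only [overcopartitionSize, Set.mem_ofPred_eq] at hp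
  exact ⟨show p.1.size ≤ n by lia, show p.2.size ≤ n by lia⟩

section

variable {R : Type*} [CommRing R] [TopologicalSpace R] [IsTopologicalRing R] [T2Space R]

theorem tsum_X_pow_overcopartitionSize :
    ∑' p, (X : R⟦X⟧) ^ overcopartitionSize p * (-1) ^ p.1.numParts =
      ∑' n, basicHypergeometricTerm 0 (-1) 0 (X ^ 2) (-X) n *
        basicHypergeometric 0 (-1) 0 (X ^ 2) (X * (X ^ 2) ^ n) := by
  have hsum (a : OddOverpartition) :=
    summable_X_pow_size_mul (R := R) fun b => ((X ^ 2) ^ a.numParts) ^ b.numParts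
  have hterm (a b : OddOverpartition) :
      (X : R⟦X⟧) ^ overcopartitionSize (a, b) * (-1) ^ a.numParts =
        X ^ a.size * (-1) ^ a.numParts * (X ^ b.size * ((X ^ 2) ^ a.numParts) ^ b.numParts) := by
    simp only [overcopartitionSize, pow_add, pow_mul]
    ring
  have hinner (a : OddOverpartition) :
      ∑' b : OddOverpartition, (X : R⟦X⟧) ^ b.size * ((X ^ 2) ^ a.numParts) ^ b.numParts =
        basicHypergeometric 0 (-1) 0 (X ^ 2) (X * (X ^ 2) ^ a.numParts) := by
    rw [tsum_X_pow_size_mul ((((X : R⟦X⟧) ^ 2) ^ a.numParts) ^ ·)]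
    exact tsum_congr (basicHypergeometricTerm_mul_pow 0 (-1) 0 (X ^ 2) X _)
  rw [Summable.tsum_prod' (summable_X_pow_mul finite_setOf_overcopartitionSize_le _)
    fun a => by simpa only [hterm] using (hsum a).mul_left _]
  simp only [hterm, (hsum _).tsum_mul_left, hinner]
  simp only [mul_assoc]
  rw [tsum_X_pow_size_mul fun n =>
    (-1) ^ n * basicHypergeometric 0 (-1) 0 (X ^ 2) (X * (X ^ 2) ^ n)]
  simp only [← mul_assoc, basicHypergeometricTerm_mul_pow, mul_neg_one]

end

theorem coeff_tsum_X_pow_mul_neg_one_pow {ι : Type*} {w : ι → ℕ} (hw : ∀ n, {i | w i ≤ n}.Finite)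
    (k : ι → ℕ) (n : ℕ) :
    coeff n (∑' i, X ^ w i * (-1 : ℤ⟦X⟧) ^ k i) =
      ({i | w i = n ∧ Even (k i)}.ncard - {i | w i = n ∧ Odd (k i)}.ncard : ℤ) := by
  have hfin : {i | w i = n}.Finite := (hw n).subset fun i hi => hi.le
  have hcoeff (i : ι) : coeff n (X ^ w i * (-1 : ℤ⟦X⟧) ^ k i) =
      if w i = n then (if Even (k i) then 1 else 0) - (if Odd (k i) then 1 else 0) else 0 := by
    obtain h | h := (k i).even_or_odd
    · simp [coeff_X_pow, h, Nat.not_odd_iff_even.2 h, eq_comm]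
    · simp [coeff_X_pow, h, Nat.not_even_iff_odd.2 h, eq_comm, apply_ite Neg.neg]
  have hncard (P : ℕ → Prop) [DecidablePred P] : ({i | w i = n ∧ P (k i)}.ncard : ℤ) =
      ∑ i ∈ hfin.toFinset, if P (k i) then 1 else 0 := by
    rw [sum_boole, ← Set.ncard_coe_finset]
    simp [Set.ofPred_and]
  rw [(summable_X_pow_mul hw _).map_tsum (coeff n) (WithPiTopology.continuous_coeff ℤ n),
    hncard, hncard, ← sum_sub_distrib, tsum_eq_sum (s := hfin.toFinset)]
  · exact sum_congr rfl fun i hi =>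
      (hcoeff i).trans (if_pos (c := w i = n) (hfin.mem_toFinset.1 hi))
  · exact fun i hi => (hcoeff i).trans (if_neg (c := w i = n) (hi <| hfin.mem_toFinset.2 ·))

theorem overCPEven_sub_overCPOdd (n : ℕ) :
    (overCPEven n - overCPOdd n : ℤ) =
      coeff n ((qPochhammerInf (-X ^ 2) (X ^ 2) * qPochhammerInf (-X ^ 2) ((X ^ 2) ^ 2)) ^ 2) := by
  rw [← tsum_basicHypergeometricTerm_mul_basicHypergeometric dvd_rfl,
    ← tsum_X_pow_overcopartitionSize,
    coeff_tsum_X_pow_mul_neg_one_pow finite_setOf_overcopartitionSize_le, overCPEven, overCPOdd,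
    ncard_sep_overCPSet, ncard_sep_overCPSet]

end Overcopartition

/-- The power series with nonnegative coefficients and no term of odd degree. -/
def evenNonneg : Subsemiring ℤ⟦X⟧ where
  carrier := {f | ∀ n, 0 ≤ coeff n f ∧ (Odd n → coeff n f = 0)}
  zero_mem' := by simp
  one_mem' n := by
    simp only [coeff_one]
    split_ifs with h <;> simp [h]
  add_mem' hf hg n := by
    rw [map_add]
    exact ⟨add_nonneg (hf n).1 (hg n).1, fun hn => by rw [(hf n).2 hn, (hg n).2 hn, add_zero]⟩
  mul_mem' {f g} hf hg n := by
    rw [coeff_mul]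
    refine ⟨sum_nonneg fun i _ => mul_nonneg (hf _).1 (hg _).1,
      fun hn => sum_eq_zero fun i hi => ?_⟩
    rw [← mem_antidiagonal.1 hi] at hn
    by_cases h : Odd i.1
    · rw [(hf _).2 h, zero_mul]
    · rw [(hg _).2 (by grind), mul_zero]

theorem isClosed_evenNonneg : IsClosed (evenNonneg : Set ℤ⟦X⟧) := by
  have hset : (evenNonneg : Set ℤ⟦X⟧) =
      ⋂ n, coeff n ⁻¹' {x | 0 ≤ x ∧ (Odd n → x = 0)} := by
    ext f
    simp [evenNonneg]
  rw [hset]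
  exact isClosed_iInter fun n =>
    (isClosed_discrete _).preimage (WithPiTopology.continuous_coeff ℤ n)

theorem X_sq_mem_evenNonneg : X ^ 2 ∈ evenNonneg := fun n => by
  rw [coeff_X_pow]
  split_ifs with h <;> simp [h]

theorem qPochhammerInf_neg_mem_evenNonneg {a q : ℤ⟦X⟧} (ha : a ∈ evenNonneg)
    (hq : q ∈ evenNonneg) : qPochhammerInf (-a) q ∈ evenNonneg := by
  refine tprod_mem isClosed_evenNonneg fun n => ?_
  rw [neg_mul, sub_neg_eq_add]
  exact add_mem (one_mem _) (mul_mem ha (pow_mem hq n))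

theorem stmt16 (n : ℕ) :
    (Even n → overCPOdd n ≤ overCPEven n) ∧ (Odd n → overCPOdd n = overCPEven n) := by
  have hmem : (qPochhammerInf (-X ^ 2) (X ^ 2) * qPochhammerInf (-X ^ 2) ((X ^ 2) ^ 2)) ^ 2 ∈
      evenNonneg :=
    pow_mem (mul_mem (qPochhammerInf_neg_mem_evenNonneg X_sq_mem_evenNonneg X_sq_mem_evenNonneg)
      (qPochhammerInf_neg_mem_evenNonneg X_sq_mem_evenNonneg (pow_mem X_sq_mem_evenNonneg 2))) 2
  obtain ⟨hnonneg, hodd⟩ := hmem n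
  rw [← overCPEven_sub_overCPOdd] at hnonneg hodd
  exact ⟨fun _ => by lia, fun hn => by have := hodd hn; lia⟩
end
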